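/- Let K ∈ ℝ, m₀ ∈ ℝ, q₀ = m₀/π, and M > 0. Suppose φ is C¹ on the closure of the semi-infinite cylinder C_K = {x ∈ ℝ³ : x₁² + x₂² < 1, x₃ > K} and satisfies: (i) ∫_{C_K} ∇φ · ∇ψ dx = 0 for every C¹ function ψ : ℝ³ → ℝ with compact support contained in {x₃ > K} (the weak formulation of Δφ = 0 in C_K with the slip condition ∇φ · n = 0 on the lateral boundary {x₁² + x₂² = 1, x₃ > K}); (ii) ∫_{B₁(0)} ∂₃φ(x′, t) dx′ = m₀ for every t > K; (iii) sup_{C_K} |∇φ| ≤ M. Then there exist constants C > 0 and d > 0, depending only on M and m₀, such that |∇φ(x) − (0, 0, q₀)| ≤ C e^{−d (x₃ − K)} for all x ∈ C_K with x₃ > K + 1. -/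

import Mathlib

open Real Set MeasureTheory

/-- Gradient of a scalar function on ℝ³. -/
noncomputable def grad3 (φ : (Fin 3 → ℝ) → ℝ) (x : Fin 3 → ℝ) : Fin 3 → ℝ :=
  fun i => fderiv ℝ φ x (Pi.single i 1)

/-- Euclidean length of a vector of ℝ³. -/
noncomputable def norm3 (u : Fin 3 → ℝ) : ℝ := Real.sqrt (∑ i, (u i) ^ 2)

/-- The open unit disk in ℝ². -/
def diskSet : Set (Fin 2 → ℝ) := {x' | (x' 0) ^ 2 + (x' 1) ^ 2 < 1}

/-- The semi-infinite open cylinder C_K = {x : x₁² + x₂² < 1, x₃ > K}. -/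
def cylFrom (K : ℝ) : Set (Fin 3 → ℝ) := {x | (x 0) ^ 2 + (x 1) ^ 2 < 1 ∧ K < x 2}

open Filter Topology

/-- Weakly harmonic C¹ functions on an open set. -/
def WH (U : Set (Fin 3 → ℝ)) (u : (Fin 3 → ℝ) → ℝ) : Prop :=
  ContDiffOn ℝ 1 u U ∧ ∀ ψ : (Fin 3 → ℝ) → ℝ, ContDiff ℝ 1 ψ → HasCompactSupport ψ →
    tsupport ψ ⊆ U → ∫ x, ∑ i, grad3 u x i * grad3 ψ x i = 0

/-- Laplacian. -/
noncomputable def lap3 (s : (Fin 3 → ℝ) → ℝ) (x : Fin 3 → ℝ) : ℝ :=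
  ∑ i, grad3 (fun y => grad3 s y i) x i

lemma exists_bumpF : ∃ F : ℝ → ℝ, ContDiff ℝ 1 F ∧ (∀ t, 0 ≤ F t) ∧ (∀ t ≤ 0, F t = 0) ∧
    (∀ t > 0, 0 < F t) ∧ (∀ t, 0 ≤ deriv F t) ∧ (∀ t ≤ 0, deriv F t = 0) ∧
    (∀ t > 0, 0 < deriv F t) := by
  have hpos : ∀ t > 0, 0 < deriv expNegInvGlue t := by
    intro t ht
    have h1 : HasDerivAt (fun x : ℝ => Real.exp (-x⁻¹)) (Real.exp (-t⁻¹) * (-(-(t^2)⁻¹))) t :=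
      ((hasDerivAt_inv ht.ne').neg).exp
    have h2 : expNegInvGlue =ᶠ[𝓝 t] fun x : ℝ => Real.exp (-x⁻¹) := by
      filter_upwards [Ioi_mem_nhds ht] with x hx
      simp only [expNegInvGlue, not_le.2 (show 0 < x from hx), if_false]
    rw [h2.deriv_eq, h1.deriv]
    have := Real.exp_pos (-t⁻¹)
    have : 0 < (t^2)⁻¹ := by positivity
    rw [neg_neg]; positivity
  have hz : ∀ t ≤ 0, deriv expNegInvGlue t = 0 := by
    intro t ht
    have hm : IsLocalMin expNegInvGlue t := by
      filter_upwards with x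
      rw [expNegInvGlue.zero_of_nonpos ht]; exact expNegInvGlue.nonneg x
    exact hm.deriv_eq_zero
  refine ⟨expNegInvGlue, expNegInvGlue.contDiff (n := 1), expNegInvGlue.nonneg,
    fun t ht => expNegInvGlue.zero_of_nonpos ht, fun t ht => expNegInvGlue.pos_of_pos ht,
    fun t => ?_, hz, hpos⟩
  rcases le_or_gt t 0 with h | h
  · exact (hz t h).ge
  · exact (hpos t h).le

lemma grad3_eq_zero_of_notMem_tsupport {ψ : (Fin 3 → ℝ) → ℝ} {x : Fin 3 → ℝ}
    (hx : x ∉ tsupport ψ) (i : Fin 3) : grad3 ψ x i = 0 := by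
  have : x ∉ Function.support (fderiv ℝ ψ) := fun h => hx (support_fderiv_subset ℝ h)
  simp only [Function.mem_support, not_not] at this
  simp [grad3, this]

lemma continuous_grad3 {ψ : (Fin 3 → ℝ) → ℝ} (h : ContDiff ℝ 1 ψ) (i : Fin 3) :
    Continuous (fun x => grad3 ψ x i) := by
  unfold grad3
  exact (h.continuous_fderiv one_ne_zero).clm_apply continuous_const

lemma continuousOn_grad3 {u : (Fin 3 → ℝ) → ℝ} {U : Set (Fin 3 → ℝ)} (hU : IsOpen U)
    (h : ContDiffOn ℝ 1 u U) (i : Fin 3) :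
    ContinuousOn (fun x => grad3 u x i) U := by
  unfold grad3
  exact (h.continuousOn_fderiv_of_isOpen hU le_rfl).clm_apply continuousOn_const

lemma hasCompactSupport_grad3 {ψ : (Fin 3 → ℝ) → ℝ} (h : HasCompactSupport ψ) (i : Fin 3) :
    HasCompactSupport (fun x => grad3 ψ x i) := by
  refine h.mono' ?_
  intro x hx
  by_contra hn
  exact hx (grad3_eq_zero_of_notMem_tsupport hn i)

/-- product of locally continuous function with compactly supported function -/
lemma continuous_mul_of_tsupport {f g : (Fin 3 → ℝ) → ℝ} {U : Set (Fin 3 → ℝ)} (hU : IsOpen U)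
    (hf : ContinuousOn f U) (hg : Continuous g) (hs : tsupport g ⊆ U) :
    Continuous (fun x => f x * g x) := by
  rw [continuous_iff_continuousAt]
  intro x
  by_cases hx : x ∈ U
  · exact (hf.continuousAt (hU.mem_nhds hx)).mul hg.continuousAt
  · have hx' : x ∉ tsupport g := fun h => hx (hs h)
    have : (fun x => f x * g x) =ᶠ[𝓝 x] fun _ => 0 := by
      filter_upwards [(isClosed_tsupport g).isOpen_compl.mem_nhds hx'] with y hy
      rw [image_eq_zero_of_notMem_tsupport hy, mul_zero]
    exact (continuousAt_const.congr this.symm)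

lemma tsupport_grad3_subset {ψ : (Fin 3 → ℝ) → ℝ} (i : Fin 3) :
    tsupport (fun x => grad3 ψ x i) ⊆ tsupport ψ := by
  refine closure_minimal ?_ (isClosed_tsupport ψ)
  intro x hx
  by_contra hn
  exact hx (grad3_eq_zero_of_notMem_tsupport hn i)

lemma integrable_mul_grad3 {u ψ : (Fin 3 → ℝ) → ℝ} {U : Set (Fin 3 → ℝ)} (hU : IsOpen U)
    (hu : ContDiffOn ℝ 1 u U) (hψ : ContDiff ℝ 1 ψ) (hc : HasCompactSupport ψ)
    (hs : tsupport ψ ⊆ U) (i : Fin 3) :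
    Integrable (fun x => grad3 u x i * grad3 ψ x i) := by
  refine Continuous.integrable_of_hasCompactSupport ?_ ?_
  · exact continuous_mul_of_tsupport hU (continuousOn_grad3 hU hu i) (continuous_grad3 hψ i)
      ((tsupport_grad3_subset i).trans hs)
  · exact (hasCompactSupport_grad3 hc i).mul_left

lemma grad3_sub {f g : (Fin 3 → ℝ) → ℝ} {x : Fin 3 → ℝ} (hf : DifferentiableAt ℝ f x)
    (hg : DifferentiableAt ℝ g x) (i : Fin 3) :
    grad3 (fun y => f y - g y) x i = grad3 f x i - grad3 g x i := by
  unfold grad3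
  rw [fderiv_fun_sub hf hg]; rfl

lemma grad3_add {f g : (Fin 3 → ℝ) → ℝ} {x : Fin 3 → ℝ} (hf : DifferentiableAt ℝ f x)
    (hg : DifferentiableAt ℝ g x) (i : Fin 3) :
    grad3 (fun y => f y + g y) x i = grad3 f x i + grad3 g x i := by
  unfold grad3
  rw [fderiv_fun_add hf hg]; rfl

lemma grad3_const_mul {f : (Fin 3 → ℝ) → ℝ} {x : Fin 3 → ℝ} (hf : DifferentiableAt ℝ f x)
    (c : ℝ) (i : Fin 3) :
    grad3 (fun y => c * f y) x i = c * grad3 f x i := by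
  unfold grad3
  rw [fderiv_const_mul hf]; rfl

lemma WH.differentiableAt {U : Set (Fin 3 → ℝ)} (hU : IsOpen U) {u : (Fin 3 → ℝ) → ℝ}
    (h : WH U u) {x : Fin 3 → ℝ} (hx : x ∈ U) : DifferentiableAt ℝ u x :=
  (h.1.contDiffAt (hU.mem_nhds hx)).differentiableAt one_ne_zero

lemma WH.sub {U : Set (Fin 3 → ℝ)} (hU : IsOpen U) {u v : (Fin 3 → ℝ) → ℝ}
    (hu : WH U u) (hv : WH U v) : WH U (fun x => u x - v x) := by
  refine ⟨hu.1.sub hv.1, fun ψ h1 h2 h3 => ?_⟩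
  have e : ∀ x, ∑ i, grad3 (fun x => u x - v x) x i * grad3 ψ x i =
      ∑ i, grad3 u x i * grad3 ψ x i - ∑ i, grad3 v x i * grad3 ψ x i := by
    intro x
    rw [← Finset.sum_sub_distrib]
    refine Finset.sum_congr rfl fun i _ => ?_
    by_cases hx : x ∈ tsupport ψ
    · rw [grad3_sub (hu.differentiableAt hU (h3 hx)) (hv.differentiableAt hU (h3 hx))]; ring
    · rw [grad3_eq_zero_of_notMem_tsupport hx]; ring
  simp_rw [e]
  rw [integral_sub, hu.2 ψ h1 h2 h3, hv.2 ψ h1 h2 h3, sub_zero]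
  · exact integrable_finsetSum _ fun i _ => integrable_mul_grad3 hU hu.1 h1 h2 h3 i
  · exact integrable_finsetSum _ fun i _ => integrable_mul_grad3 hU hv.1 h1 h2 h3 i

lemma WH.const_mul {U : Set (Fin 3 → ℝ)} (hU : IsOpen U) {u : (Fin 3 → ℝ) → ℝ}
    (hu : WH U u) (c : ℝ) : WH U (fun x => c * u x) := by
  refine ⟨contDiffOn_const.mul hu.1, fun ψ h1 h2 h3 => ?_⟩
  have e : ∀ x, ∑ i, grad3 (fun x => c * u x) x i * grad3 ψ x i =
      c * ∑ i, grad3 u x i * grad3 ψ x i := by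
    intro x
    rw [Finset.mul_sum]
    refine Finset.sum_congr rfl fun i _ => ?_
    by_cases hx : x ∈ tsupport ψ
    · rw [grad3_const_mul (hu.differentiableAt hU (h3 hx))]; ring
    · rw [grad3_eq_zero_of_notMem_tsupport hx]; ring
  simp_rw [e]
  rw [integral_const_mul, hu.2 ψ h1 h2 h3, mul_zero]

lemma WH.add_const {U : Set (Fin 3 → ℝ)} {u : (Fin 3 → ℝ) → ℝ}
    (hu : WH U u) (c : ℝ) : WH U (fun x => u x + c) := by
  refine ⟨hu.1.add contDiffOn_const, fun ψ h1 h2 h3 => ?_⟩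
  have e : ∀ x i, grad3 (fun x => u x + c) x i = grad3 u x i := by
    intro x i
    simp [grad3, fderiv_add_const]
  simp_rw [e]
  exact hu.2 ψ h1 h2 h3

lemma WH.mono {U V : Set (Fin 3 → ℝ)} {u : (Fin 3 → ℝ) → ℝ} (hu : WH U u) (h : V ⊆ U) :
    WH V u := ⟨hu.1.mono h, fun ψ h1 h2 h3 => hu.2 ψ h1 h2 (h3.trans h)⟩

lemma contDiff_grad3 {s : (Fin 3 → ℝ) → ℝ} (hs : ContDiff ℝ 2 s) (i : Fin 3) :
    ContDiff ℝ 1 (fun y => grad3 s y i) := by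
  unfold grad3
  exact (hs.fderiv_right (m := 1) (by norm_num)).clm_apply contDiff_const

lemma continuous_lap3 {s : (Fin 3 → ℝ) → ℝ} (hs : ContDiff ℝ 2 s) : Continuous (lap3 s) := by
  unfold lap3
  exact continuous_finsetSum _ fun i _ => continuous_grad3 (contDiff_grad3 hs i) i

lemma integral_grad_mul_grad {s ψ : (Fin 3 → ℝ) → ℝ} (hs : ContDiff ℝ 2 s)
    (hψ : ContDiff ℝ 1 ψ) (hc : HasCompactSupport ψ) :
    ∫ x, ∑ i, grad3 s x i * grad3 ψ x i = - ∫ x, lap3 s x * ψ x := by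
  have h1 : ∀ i, Integrable (fun x => grad3 s x i * grad3 ψ x i) := fun i =>
    integrable_mul_grad3 isOpen_univ (hs.of_le (by norm_num)).contDiffOn hψ hc (subset_univ _) i
  have h2 : ∀ i, Integrable (fun x => grad3 (fun y => grad3 s y i) x i * ψ x) := fun i =>
    ((continuous_grad3 (contDiff_grad3 hs i) i).mul hψ.continuous).integrable_of_hasCompactSupport
      hc.mul_left
  have h3 : ∀ i, Integrable (fun x => grad3 s x i * ψ x) := fun i =>
    ((contDiff_grad3 hs i).continuous.mul hψ.continuous).integrable_of_hasCompactSupport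
      hc.mul_left
  rw [integral_finsetSum _ fun i _ => h1 i]
  simp_rw [lap3, Finset.sum_mul]
  rw [integral_finsetSum _ fun i _ => h2 i, ← Finset.sum_neg_distrib]
  refine Finset.sum_congr rfl fun i _ => ?_
  exact integral_mul_fderiv_eq_neg_fderiv_mul_of_integrable (h2 i) (h1 i) (h3 i)
    (fun x _ => ((contDiff_grad3 hs i).differentiable one_ne_zero) x)
    (fun x _ => (hψ.differentiable one_ne_zero) x)

/-- squared Euclidean distance -/
def sqd (p x : Fin 3 → ℝ) : ℝ := ∑ j, (x j - p j) ^ 2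

lemma contDiff_sqd (p : Fin 3 → ℝ) {n : WithTop ℕ∞} : ContDiff ℝ n (sqd p) := by
  unfold sqd
  fun_prop

lemma grad3_sqd (p x : Fin 3 → ℝ) (i : Fin 3) : grad3 (sqd p) x i = 2 * (x i - p i) := by
  have h : HasFDerivAt (sqd p) (∑ j, (2 * (x j - p j)) •
      (ContinuousLinearMap.proj j : (Fin 3 → ℝ) →L[ℝ] ℝ)) x := by
    unfold sqd
    refine HasFDerivAt.fun_sum fun j _ => ?_
    have h1 : HasFDerivAt (fun x : Fin 3 → ℝ => x j - p j)
      (ContinuousLinearMap.proj j : (Fin 3 → ℝ) →L[ℝ] ℝ) x :=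
      (hasFDerivAt_apply j x).sub_const _
    simpa using h1.pow 2
  rw [grad3, h.fderiv]
  simp [Pi.single_apply]

lemma lap3_sqd (p x : Fin 3 → ℝ) : lap3 (sqd p) x = 6 := by
  unfold lap3
  simp_rw [grad3_sqd]
  have : ∀ i : Fin 3, grad3 (fun y => 2 * (y i - p i)) x i = 2 := by
    intro i
    have h1 : HasFDerivAt (fun x : Fin 3 → ℝ => 2 * (x i - p i))
      ((2:ℝ) • (ContinuousLinearMap.proj i : (Fin 3 → ℝ) →L[ℝ] ℝ)) x :=
      ((hasFDerivAt_apply i x).sub_const _).const_mul 2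
    rw [grad3, h1.fderiv]; simp
  simp [this]; norm_num

lemma lap3_sub {f g : (Fin 3 → ℝ) → ℝ} (hf : ContDiff ℝ 2 f) (hg : ContDiff ℝ 2 g)
    (x : Fin 3 → ℝ) : lap3 (fun y => f y - g y) x = lap3 f x - lap3 g x := by
  unfold lap3
  rw [← Finset.sum_sub_distrib]
  refine Finset.sum_congr rfl fun i _ => ?_
  have : (fun y => grad3 (fun y => f y - g y) y i) = fun y => grad3 f y i - grad3 g y i := by
    funext y
    exact grad3_sub (hf.differentiable two_ne_zero y) (hg.differentiable two_ne_zero y) i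
  rw [this]
  exact grad3_sub ((contDiff_grad3 hf i).differentiable one_ne_zero x)
    ((contDiff_grad3 hg i).differentiable one_ne_zero x) i

lemma lap3_add {f g : (Fin 3 → ℝ) → ℝ} (hf : ContDiff ℝ 2 f) (hg : ContDiff ℝ 2 g)
    (x : Fin 3 → ℝ) : lap3 (fun y => f y + g y) x = lap3 f x + lap3 g x := by
  unfold lap3
  rw [← Finset.sum_add_distrib]
  refine Finset.sum_congr rfl fun i _ => ?_
  have : (fun y => grad3 (fun y => f y + g y) y i) = fun y => grad3 f y i + grad3 g y i := by
    funext y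
    exact grad3_add (hf.differentiable two_ne_zero y) (hg.differentiable two_ne_zero y) i
  rw [this]
  exact grad3_add ((contDiff_grad3 hf i).differentiable one_ne_zero x)
    ((contDiff_grad3 hg i).differentiable one_ne_zero x) i

lemma lap3_const_mul {f : (Fin 3 → ℝ) → ℝ} (hf : ContDiff ℝ 2 f) (c : ℝ)
    (x : Fin 3 → ℝ) : lap3 (fun y => c * f y) x = c * lap3 f x := by
  unfold lap3
  rw [Finset.mul_sum]
  refine Finset.sum_congr rfl fun i _ => ?_
  have : (fun y => grad3 (fun y => c * f y) y i) = fun y => c * grad3 f y i := by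
    funext y
    exact grad3_const_mul (hf.differentiable two_ne_zero y) c i
  rw [this]
  exact grad3_const_mul ((contDiff_grad3 hf i).differentiable one_ne_zero x) c i

theorem WH.not_localMin {U : Set (Fin 3 → ℝ)} (hU : IsOpen U) {u s : (Fin 3 → ℝ) → ℝ}
    (hu : WH U u) (hs : ContDiff ℝ 2 s) {x0 : Fin 3 → ℝ} (hx0 : x0 ∈ U) (hl : 0 < lap3 s x0)
    (hm : IsLocalMin (fun x => u x - s x) x0) : False := by
  obtain ⟨F, hF1, hF0, hFz, hFp, hF'0, hF'z, hF'p⟩ := exists_bumpF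
  set η := lap3 s x0 / 12 with hη
  have hηp : 0 < η := by positivity
  set s' : (Fin 3 → ℝ) → ℝ := fun x => s x - η * sqd x0 x with hs'def
  have hq : ContDiff ℝ 2 (fun x => η * sqd x0 x) := contDiff_const.mul (contDiff_sqd x0)
  have hs' : ContDiff ℝ 2 s' := hs.sub hq
  have hlap : ∀ x, lap3 s' x = lap3 s x - η * 6 := by
    intro x
    rw [hs'def, lap3_sub hs hq, lap3_const_mul (contDiff_sqd x0), lap3_sqd]
  have hlap0 : 0 < lap3 s' x0 := by rw [hlap]; linarith
  set f : (Fin 3 → ℝ) → ℝ := fun x => u x - s' x with hf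
  have hev : ∀ᶠ x in 𝓝 x0, x ∈ U ∧ (u x0 - s x0 ≤ u x - s x) ∧ 0 < lap3 s' x :=
    (hU.eventually_mem hx0).and (hm.and ((continuous_lap3 hs').continuousAt.eventually (lt_mem_nhds hlap0)))
  obtain ⟨R, hR, hball⟩ := Metric.eventually_nhds_iff_ball.1 hev
  have hsq0 : sqd x0 x0 = 0 := by simp [sqd]
  have hfx : ∀ x ∈ Metric.ball x0 R, f x0 + η * sqd x0 x ≤ f x := by
    intro x hx
    have := (hball x hx).2.1
    simp only [hf, hs'def, hsq0]; linarith
  set m := f x0 + η * (R/2)^2 with hmdef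
  have hclose : ∀ x ∈ Metric.ball x0 R, 0 < m - f x → x ∈ Metric.closedBall x0 (R/2) := by
    intro x hx h
    have h1 := hfx x hx
    have h2 : η * sqd x0 x < η * (R/2)^2 := by linarith
    have h3 : sqd x0 x < (R/2)^2 := lt_of_mul_lt_mul_left h2 hηp.le
    rw [Metric.mem_closedBall, dist_pi_le_iff (by positivity)]
    intro i
    have h4 : (x i - x0 i)^2 ≤ sqd x0 x :=
      Finset.single_le_sum (f := fun j => (x j - x0 j)^2) (fun j _ => sq_nonneg _) (Finset.mem_univ i)
    rw [Real.dist_eq]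
    exact abs_le_of_sq_le_sq (h4.trans h3.le) (by positivity)
  have hBU : Metric.ball x0 R ⊆ U := fun x hx => (hball x hx).1
  have hfC : ContDiffOn ℝ 1 f (Metric.ball x0 R) :=
    (hu.1.mono hBU).sub (hs'.of_le (by norm_num)).contDiffOn
  have hfCat : ∀ x ∈ Metric.ball x0 R, ContDiffAt ℝ 1 f x := fun x hx =>
    hfC.contDiffAt (Metric.isOpen_ball.mem_nhds hx)
  set ψ : (Fin 3 → ℝ) → ℝ := (Metric.ball x0 R).indicator (fun x => F (m - f x)) with hψ
  have hψ0 : ∀ x, 0 ≤ ψ x := fun x => indicator_nonneg (fun y _ => hF0 _) x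
  have hψzero : ∀ x, x ∉ Metric.closedBall x0 (R/2) → ψ x = 0 := by
    intro x hx
    by_cases hxb : x ∈ Metric.ball x0 R
    · rw [hψ, indicator_of_mem hxb]
      apply hFz
      by_contra hcon
      exact hx (hclose x hxb (not_le.1 hcon))
    · rw [hψ, indicator_of_notMem hxb]
  have hsupp : tsupport ψ ⊆ Metric.closedBall x0 (R/2) := by
    refine closure_minimal ?_ Metric.isClosed_closedBall
    intro x hx
    by_contra hn
    exact hx (hψzero x hn)
  have hcb : Metric.closedBall x0 (R/2) ⊆ Metric.ball x0 R :=
    Metric.closedBall_subset_ball (by linarith)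
  have hψev : ∀ x ∈ Metric.ball x0 R, ψ =ᶠ[𝓝 x] fun x => F (m - f x) := by
    intro x hx
    filter_upwards [Metric.isOpen_ball.mem_nhds hx] with y hy
    rw [hψ, indicator_of_mem hy]
  have hψC : ContDiff ℝ 1 ψ := by
    rw [contDiff_iff_contDiffAt]
    intro x
    by_cases hx : x ∈ Metric.ball x0 R
    · refine ContDiffAt.congr_of_eventuallyEq ?_ (hψev x hx)
      exact (hF1.contDiffAt).comp x (contDiffAt_const.sub (hfCat x hx))
    · have hx' : x ∉ Metric.closedBall x0 (R/2) := fun h => hx (hcb h)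
      refine ContDiffAt.congr_of_eventuallyEq (contDiffAt_const (c := (0:ℝ))) ?_
      filter_upwards [Metric.isClosed_closedBall.isOpen_compl.mem_nhds hx'] with y hy
      exact hψzero y hy
  have hψc : HasCompactSupport ψ :=
    HasCompactSupport.of_support_subset_isCompact (isCompact_closedBall x0 (R/2))
      ((subset_tsupport _).trans hsupp)
  have hgψ : ∀ x ∈ Metric.ball x0 R, ∀ i, grad3 ψ x i = - (deriv F (m - f x) * grad3 f x i) := by
    intro x hx i
    have hd : HasFDerivAt f (fderiv ℝ f x) x :=
      ((hfCat x hx).differentiableAt one_ne_zero).hasFDerivAt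
    have h1 : HasDerivAt F (deriv F (m - f x)) (m - f x) :=
      (hF1.differentiable one_ne_zero _).hasDerivAt
    have h2 := h1.comp_hasFDerivAt x (hd.const_sub m)
    have h3 : fderiv ℝ ψ x = _ := ((hψev x hx).fderiv_eq).trans h2.fderiv
    simp [grad3, h3]
  -- weak form
  have hw := hu.2 ψ hψC hψc ((hsupp.trans hcb).trans hBU)
  have hpar := integral_grad_mul_grad hs' hψC hψc
  have I1 : ∀ i, Integrable (fun x => grad3 u x i * grad3 ψ x i) := fun i =>
    integrable_mul_grad3 hU hu.1 hψC hψc ((hsupp.trans hcb).trans hBU) i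
  have I2 : ∀ i, Integrable (fun x => grad3 s' x i * grad3 ψ x i) := fun i =>
    integrable_mul_grad3 isOpen_univ (hs'.of_le (by norm_num)).contDiffOn hψC hψc (subset_univ _) i
  have hdiff : ∫ x, (∑ i, grad3 u x i * grad3 ψ x i - ∑ i, grad3 s' x i * grad3 ψ x i) =
      ∫ x, lap3 s' x * ψ x := by
    rw [integral_sub (integrable_finsetSum _ fun i _ => I1 i)
      (integrable_finsetSum _ fun i _ => I2 i), hw, hpar]; ring
  have hle : ∫ x, (∑ i, grad3 u x i * grad3 ψ x i - ∑ i, grad3 s' x i * grad3 ψ x i) ≤ 0 := by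
    refine integral_nonpos fun x => ?_
    rw [← Finset.sum_sub_distrib]
    refine Finset.sum_nonpos fun i _ => ?_
    by_cases hx : x ∈ Metric.ball x0 R
    · have h1 : grad3 f x i = grad3 u x i - grad3 s' x i :=
        grad3_sub (hu.differentiableAt hU (hBU hx)) (hs'.differentiable two_ne_zero x) i
      have h2 : grad3 u x i * grad3 ψ x i - grad3 s' x i * grad3 ψ x i =
        - (deriv F (m - f x) * (grad3 f x i)^2) := by
        rw [← sub_mul, ← h1, hgψ x hx]; ring
      rw [h2]
      have := mul_nonneg (hF'0 (m - f x)) (sq_nonneg (grad3 f x i))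
      linarith
    · have : x ∉ tsupport ψ := fun h => hx (hcb (hsupp h))
      rw [grad3_eq_zero_of_notMem_tsupport this]; simp
  have hpos : 0 < ∫ x, lap3 s' x * ψ x := by
    refine Continuous.integral_pos_of_hasCompactSupport_nonneg_nonzero (x := x0)
      ((continuous_lap3 hs').mul hψC.continuous) hψc.mul_left ?_ ?_
    · intro x
      by_cases hx : x ∈ Metric.ball x0 R
      · exact mul_nonneg (hball x hx).2.2.le (hψ0 x)
      · simp [hψ, indicator_of_notMem hx]
    · have hx0b : x0 ∈ Metric.ball x0 R := Metric.mem_ball_self hR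
      have : ψ x0 = F (m - f x0) := by rw [hψ, indicator_of_mem hx0b]
      rw [this]
      have h1 : 0 < m - f x0 := by
        rw [hmdef]
        have : 0 < η * (R/2)^2 := by positivity
        linarith
      exact (mul_pos hlap0 (hFp _ h1)).ne'
  linarith

lemma fderiv_apply_eq_sum {u : (Fin 3 → ℝ) → ℝ} (x a : Fin 3 → ℝ) :
    fderiv ℝ u x a = ∑ j, a j * grad3 u x j := by
  have : a = ∑ j, a j • (Pi.single j (1:ℝ) : Fin 3 → ℝ) := by
    funext k
    simp [Finset.sum_apply, Pi.single_apply]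
  conv_lhs => rw [this]
  simp [grad3]

lemma integral_comp_affine (e : (Fin 3 → ℝ) ≃L[ℝ] (Fin 3 → ℝ)) (b : Fin 3 → ℝ)
    {g : (Fin 3 → ℝ) → ℝ} (hg : ∫ x, g x = 0) : ∫ x, g (e x + b) = 0 := by
  have h1 : ∫ x, g (e x + b) = ∫ y, g (y + b) ∂(Measure.map e volume) := by
    exact (e.toHomeomorph.measurableEmbedding.integral_map (fun y => g (y + b))).symm
  have hdet : LinearMap.det (e : (Fin 3 → ℝ) →ₗ[ℝ] (Fin 3 → ℝ)) ≠ 0 :=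
    (LinearEquiv.isUnit_det' e.toLinearEquiv).ne_zero
  have h2 := Measure.map_linearMap_addHaar_eq_smul_addHaar (volume : Measure (Fin 3 → ℝ)) hdet
  have h3 : Measure.map e (volume : Measure (Fin 3 → ℝ)) =
    ENNReal.ofReal |(LinearMap.det (e : (Fin 3 → ℝ) →ₗ[ℝ] (Fin 3 → ℝ)))⁻¹| • volume := h2
  rw [h1, h3, integral_smul_measure, integral_add_right_eq_self (fun x => g x) b, hg, smul_zero]

theorem WH.comp_affine {U V : Set (Fin 3 → ℝ)} (hU : IsOpen U) {u : (Fin 3 → ℝ) → ℝ}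
    (hu : WH U u) (L L' : (Fin 3 → ℝ) →L[ℝ] (Fin 3 → ℝ)) (h1 : ∀ x, L' (L x) = x)
    (h2 : ∀ x, L (L' x) = x) (c : ℝ)
    (hL : ∀ j k, ∑ i, L (Pi.single i 1) j * L (Pi.single i 1) k = if j = k then c else 0)
    (b : Fin 3 → ℝ) (hV : ∀ x ∈ V, L x + b ∈ U) : WH V (fun x => u (L x + b)) := by
  have hT : ContDiff ℝ 1 (fun x => L x + b) := L.contDiff.add contDiff_const
  refine ⟨hu.1.comp hT.contDiffOn hV, fun ψ p1 p2 p3 => ?_⟩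
  set ψ' : (Fin 3 → ℝ) → ℝ := fun y => ψ (L' (y - b)) with hψ'
  have hS : ContDiff ℝ 1 (fun y => L' (y - b)) := L'.contDiff.comp (contDiff_id.sub contDiff_const)
  have q1 : ContDiff ℝ 1 ψ' := p1.comp hS
  have hsup : ∀ y ∈ tsupport ψ', L' (y - b) ∈ tsupport ψ := by
    have hcl : IsClosed ((fun y => L' (y - b)) ⁻¹' tsupport ψ) :=
      (isClosed_tsupport ψ).preimage hS.continuous
    refine fun y hy => (closure_minimal ?_ hcl) hy
    intro z hz
    exact subset_tsupport _ hz
  have hback : ∀ y, L (L' (y - b)) + b = y := fun y => by rw [h2]; simp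
  have q2 : HasCompactSupport ψ' := by
    have : tsupport ψ' ⊆ (fun x => L x + b) '' tsupport ψ := fun y hy =>
      ⟨_, hsup y hy, hback y⟩
    exact (IsCompact.image p2 hT.continuous).of_isClosed_subset (isClosed_tsupport _) this
  have q3 : tsupport ψ' ⊆ U := by
    intro y hy
    have := hV _ (p3 (hsup y hy))
    rwa [hback] at this
  have hw := hu.2 ψ' q1 q2 q3
  have hψψ : ψ = fun x => ψ' (L x + b) := by
    funext x; simp [hψ', h1]
  have hdT : ∀ x, HasFDerivAt (fun x => L x + b) L x := fun x => L.hasFDerivAt.add_const b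
  have hgψ : ∀ x i, grad3 ψ x i = ∑ j, L (Pi.single i 1) j * grad3 ψ' (L x + b) j := by
    intro x i
    have : HasFDerivAt (fun x => ψ' (L x + b)) ((fderiv ℝ ψ' (L x + b)).comp L) x :=
      ((q1.differentiable one_ne_zero _).hasFDerivAt).comp x (hdT x)
    rw [grad3]
    conv_lhs => rw [hψψ]
    rw [this.fderiv]
    exact fderiv_apply_eq_sum _ _
  have e : ∀ x, ∑ i, grad3 (fun x => u (L x + b)) x i * grad3 ψ x i =
      (fun y => c * ∑ j, grad3 u y j * grad3 ψ' y j) (L x + b) := by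
    intro x
    by_cases hx : x ∈ tsupport ψ
    · have hgu : ∀ i, grad3 (fun x => u (L x + b)) x i =
          ∑ j, L (Pi.single i 1) j * grad3 u (L x + b) j := by
        intro i
        have : HasFDerivAt (fun x => u (L x + b)) ((fderiv ℝ u (L x + b)).comp L) x :=
          ((hu.differentiableAt hU (hV _ (p3 hx))).hasFDerivAt).comp x (hdT x)
        rw [grad3, this.fderiv]
        exact fderiv_apply_eq_sum _ _
      simp_rw [hgu, hgψ]
      have a00 := hL 0 0
      have a01 := hL 0 1
      have a02 := hL 0 2
      have a11 := hL 1 1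
      have a12 := hL 1 2
      have a22 := hL 2 2
      simp only [Fin.sum_univ_three] at *
      simp at a00 a01 a02 a11 a12 a22
      generalize grad3 u (L x + b) = G at *
      generalize grad3 ψ' (L x + b) = H at *
      linear_combination (G 0 * H 0) * a00 + (G 0 * H 1 + G 1 * H 0) * a01 +
        (G 0 * H 2 + G 2 * H 0) * a02 + (G 1 * H 1) * a11 + (G 1 * H 2 + G 2 * H 1) * a12 +
        (G 2 * H 2) * a22
    · have h0 : ∀ j, grad3 ψ' (L x + b) j = 0 := by
        intro j
        have hx' : L x + b ∉ tsupport ψ' := fun h => by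
          have := hsup _ h
          simp [h1] at this
          exact hx this
        exact grad3_eq_zero_of_notMem_tsupport hx' j
      simp [grad3_eq_zero_of_notMem_tsupport hx, h0]
  simp_rw [e]
  refine integral_comp_affine (ContinuousLinearEquiv.equivOfInverse L L' h1 h2) b
    (g := fun y => c * ∑ j, grad3 u y j * grad3 ψ' y j) ?_
  rw [integral_const_mul, hw, mul_zero]

/-- horizontal scaling -/
def sc (t : ℝ) (x : Fin 3 → ℝ) : Fin 3 → ℝ := ![t * x 0, t * x 1, x 2]

/-- closed cylinder section -/
def Dbar (a b : ℝ) : Set (Fin 3 → ℝ) := {x | (x 0)^2 + (x 1)^2 ≤ 1 ∧ a ≤ x 2 ∧ x 2 ≤ b}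

/-- open cylinder section -/
def Dint (a b : ℝ) : Set (Fin 3 → ℝ) := {x | (x 0)^2 + (x 1)^2 < 1 ∧ a < x 2 ∧ x 2 < b}

/-- Neumann condition at a lateral boundary point -/
def Neu (u : (Fin 3 → ℝ) → ℝ) (x : Fin 3 → ℝ) : Prop :=
  HasDerivWithinAt (fun t => u (sc t x)) 0 (Icc 0 1) 1

lemma isOpen_Dint (a b : ℝ) : IsOpen (Dint a b) := by
  simp only [Dint, ofPred_and]
  refine IsOpen.inter (isOpen_lt ?_ ?_) (IsOpen.inter (isOpen_lt ?_ ?_) (isOpen_lt ?_ ?_)) <;>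
    fun_prop

lemma isOpen_cylFrom (K : ℝ) : IsOpen (cylFrom K) := by
  simp only [cylFrom, ofPred_and]
  refine IsOpen.inter (isOpen_lt ?_ ?_) (isOpen_lt ?_ ?_) <;> fun_prop

lemma isCompact_Dbar (a b : ℝ) : IsCompact (Dbar a b) := by
  refine Metric.isCompact_of_isClosed_isBounded ?_ ?_
  · simp only [Dbar, ofPred_and]
    refine IsClosed.inter (isClosed_le ?_ ?_)
      (IsClosed.inter (isClosed_le ?_ ?_) (isClosed_le ?_ ?_)) <;> fun_prop
  · refine (Metric.isBounded_Icc (![-1,-1,a] : Fin 3 → ℝ) (![1,1,b])).subset ?_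
    rintro x ⟨h1, h2, h3⟩
    have a0 : -1 ≤ x 0 ∧ x 0 ≤ 1 := by constructor <;> nlinarith [sq_nonneg (x 1)]
    have a1 : -1 ≤ x 1 ∧ x 1 ≤ 1 := by constructor <;> nlinarith [sq_nonneg (x 0)]
    constructor <;> intro i <;> fin_cases i <;> simp <;> tauto

lemma sc_one (x : Fin 3 → ℝ) : sc 1 x = x := by
  funext i; fin_cases i <;> simp [sc]

lemma sc_zero_apply (t : ℝ) (x : Fin 3 → ℝ) : sc t x 0 = t * x 0 := rfl
lemma sc_one_apply (t : ℝ) (x : Fin 3 → ℝ) : sc t x 1 = t * x 1 := rfl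
lemma sc_two_apply (t : ℝ) (x : Fin 3 → ℝ) : sc t x 2 = x 2 := rfl

lemma hasDerivAt_sc (t : ℝ) (x : Fin 3 → ℝ) :
    HasDerivAt (fun t => sc t x) (![x 0, x 1, 0]) t := by
  rw [hasDerivAt_pi]
  intro i
  fin_cases i
  · simpa [sc] using (hasDerivAt_id t).mul_const (x 0)
  · simpa [sc] using (hasDerivAt_id t).mul_const (x 1)
  · simpa [sc] using hasDerivAt_const t (x 2)

lemma sc_sq_le {t : ℝ} (ht : t ∈ Icc (0:ℝ) 1) {x : Fin 3 → ℝ} (hx : (x 0)^2 + (x 1)^2 ≤ 1) :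
    (sc t x 0)^2 + (sc t x 1)^2 ≤ 1 := by
  rw [sc_zero_apply, sc_one_apply]
  have : t^2 ≤ 1 := by nlinarith [ht.1, ht.2]
  nlinarith [sq_nonneg (x 0), sq_nonneg (x 1), sq_nonneg t]

lemma sc_sq_lt {t : ℝ} (h0 : 0 ≤ t) (h1 : t < 1) {x : Fin 3 → ℝ} (hx : (x 0)^2 + (x 1)^2 ≤ 1) :
    (sc t x 0)^2 + (sc t x 1)^2 < 1 := by
  rw [sc_zero_apply, sc_one_apply]
  have : t^2 < 1 := by nlinarith
  nlinarith [sq_nonneg (x 0), sq_nonneg (x 1), sq_nonneg t]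

lemma deriv_nonpos_of_min_right {g : ℝ → ℝ} {g' : ℝ}
    (h : HasDerivWithinAt g g' (Icc 0 1) 1) (hm : ∀ t ∈ Icc (0:ℝ) 1, g 1 ≤ g t) : g' ≤ 0 := by
  have h2 : HasDerivWithinAt g g' (Iio 1) 1 := by
    refine (h.mono_of_mem_nhdsWithin ?_)
    have : Ioo (0:ℝ) 1 ∈ 𝓝[<] (1:ℝ) := Ioo_mem_nhdsLT (by norm_num)
    exact mem_of_superset this Ioo_subset_Icc_self
  have h3 := (hasDerivWithinAt_iff_tendsto_slope' (by simp)).1 h2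
  refine le_of_tendsto h3 ?_
  have : Ioo (0:ℝ) 1 ∈ 𝓝[<] (1:ℝ) := Ioo_mem_nhdsLT (by norm_num)
  filter_upwards [this] with t ht
  rw [slope_def_field]
  apply div_nonpos_of_nonneg_of_nonpos
  · have := hm t (Ioo_subset_Icc_self ht); linarith
  · linarith [ht.2]

theorem MPcyl {a b : ℝ} {u s : (Fin 3 → ℝ) → ℝ} (hc : ContinuousOn u (Dbar a b))
    (hu : WH (Dint a b) u) (hs : ContDiff ℝ 2 s)
    (hIntg : ∀ x ∈ Dint a b, u x < s x → 0 < lap3 s x)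
    (hlat : ∀ x, (x 0)^2 + (x 1)^2 = 1 → a < x 2 → x 2 < b →
      s x ≤ u x ∨ (Neu u x ∧ x 0 * grad3 s x 0 + x 1 * grad3 s x 1 < 0))
    (hends : ∀ x ∈ Dbar a b, x 2 = a ∨ x 2 = b → s x ≤ u x) :
    ∀ x ∈ Dbar a b, s x ≤ u x := by
  intro x hx
  obtain ⟨y, hy, hmin⟩ := (isCompact_Dbar a b).exists_isMinOn ⟨x, hx⟩
    (hc.sub hs.continuous.continuousOn)
  have hmin' : ∀ z ∈ Dbar a b, u y - s y ≤ u z - s z := fun z hz => hmin hz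
  suffices s y ≤ u y by linarith [hmin' x hx]
  by_contra hneg
  push Not at hneg
  obtain ⟨hy1, hy2, hy3⟩ := hy
  have hy' : y ∈ Dbar a b := ⟨hy1, hy2, hy3⟩
  have hya : a < y 2 := lt_of_le_of_ne hy2 fun h =>
    absurd (hends y hy' (Or.inl h.symm)) (not_le.2 hneg)
  have hyb : y 2 < b := lt_of_le_of_ne hy3 fun h =>
    absurd (hends y hy' (Or.inr h)) (not_le.2 hneg)
  rcases lt_or_eq_of_le hy1 with hlt | heq
  · have hyD : y ∈ Dint a b := ⟨hlt, hya, hyb⟩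
    refine hu.not_localMin (isOpen_Dint a b) hs hyD (hIntg y hyD hneg) ?_
    filter_upwards [(isOpen_Dint a b).mem_nhds hyD] with z hz
    exact hmin' z ⟨hz.1.le, hz.2.1.le, hz.2.2.le⟩
  · rcases hlat y heq hya hyb with h | ⟨h, h'⟩
    · linarith
    · have hsd : HasDerivWithinAt (fun t => s (sc t y))
          (y 0 * grad3 s y 0 + y 1 * grad3 s y 1) (Icc 0 1) 1 := by
        have h1 : HasFDerivAt s (fderiv ℝ s y) (sc 1 y) := by
          rw [sc_one]; exact (hs.differentiable two_ne_zero y).hasFDerivAt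
        have h2 := h1.comp_hasDerivAt (1:ℝ) (hasDerivAt_sc 1 y)
        have h3 : fderiv ℝ s y ![y 0, y 1, 0] = y 0 * grad3 s y 0 + y 1 * grad3 s y 1 := by
          rw [fderiv_apply_eq_sum, Fin.sum_univ_three]; simp
        rw [h3] at h2
        exact h2.hasDerivWithinAt
      have hd := HasDerivWithinAt.sub h hsd
      have := deriv_nonpos_of_min_right hd (fun t ht => by
        have := hmin' (sc t y) ⟨sc_sq_le ht hy1, hy2, hy3⟩
        simpa [sc_one] using this)
      linarith

lemma grad3_coord (x : Fin 3 → ℝ) (j i : Fin 3) :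
    grad3 (fun y => y j) x i = if i = j then 1 else 0 := by
  rw [grad3, (hasFDerivAt_apply j x).fderiv]
  simp [Pi.single_apply, eq_comm]

lemma grad3_const (c : ℝ) (x : Fin 3 → ℝ) (i : Fin 3) : grad3 (fun _ => c) x i = 0 := by
  simp [grad3]

lemma grad3_mul {f g : (Fin 3 → ℝ) → ℝ} {x : Fin 3 → ℝ} (hf : DifferentiableAt ℝ f x)
    (hg : DifferentiableAt ℝ g x) (i : Fin 3) :
    grad3 (fun y => f y * g y) x i = f x * grad3 g x i + g x * grad3 f x i := by
  unfold grad3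
  rw [fderiv_fun_mul hf hg]; rfl

lemma grad3_comp {g : ℝ → ℝ} {g' : ℝ} {f : (Fin 3 → ℝ) → ℝ} {x : Fin 3 → ℝ}
    (hg : HasDerivAt g g' (f x)) (hf : DifferentiableAt ℝ f x) (i : Fin 3) :
    grad3 (fun y => g (f y)) x i = g' * grad3 f x i := by
  unfold grad3
  have := hg.comp_hasFDerivAt x hf.hasFDerivAt
  have h2 : fderiv ℝ (fun y => g (f y)) x = g' • fderiv ℝ f x := this.fderiv
  rw [h2]; rfl

/-- exponential barrier -/
noncomputable def ebar (A : ℝ) (p : Fin 3 → ℝ) (x : Fin 3 → ℝ) : ℝ := Real.exp (-A * sqd p x)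

lemma contDiff_ebar (A : ℝ) (p : Fin 3 → ℝ) {n : WithTop ℕ∞} : ContDiff ℝ n (ebar A p) :=
  (contDiff_const.mul (contDiff_sqd p)).exp

lemma grad3_ebar (A : ℝ) (p x : Fin 3 → ℝ) (i : Fin 3) :
    grad3 (ebar A p) x i = -2 * A * (x i - p i) * ebar A p x := by
  have hd : DifferentiableAt ℝ (sqd p) x := (contDiff_sqd p (n := 1)).differentiable one_ne_zero x
  have := grad3_comp (g := Real.exp) (f := fun y => -A * sqd p y) (x := x)
    (Real.hasDerivAt_exp _) (hd.const_mul _) i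
  change grad3 (fun y => Real.exp (-A * sqd p y)) x i = _
  rw [this, grad3_const_mul hd, grad3_sqd]
  simp only [ebar]; ring

lemma lap3_ebar (A : ℝ) (p x : Fin 3 → ℝ) :
    lap3 (ebar A p) x = (4 * A^2 * sqd p x - 6 * A) * ebar A p x := by
  unfold lap3
  simp_rw [grad3_ebar]
  have hd : DifferentiableAt ℝ (ebar A p) x := (contDiff_ebar A p (n := 1)).differentiable one_ne_zero x
  have : ∀ i : Fin 3, grad3 (fun y => -2 * A * (y i - p i) * ebar A p y) x i =
      (4 * A^2 * (x i - p i)^2 - 2 * A) * ebar A p x := by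
    intro i
    have hd1 : DifferentiableAt ℝ (fun y : Fin 3 → ℝ => y i - p i) x := by fun_prop
    have e1 : grad3 (fun y : Fin 3 → ℝ => -2 * A * (y i - p i)) x i = -2 * A := by
      rw [grad3_const_mul hd1, grad3_sub (by fun_prop) (by fun_prop), grad3_coord, grad3_const]
      simp
    rw [grad3_mul (hd1.const_mul _) hd, grad3_ebar, e1]
    ring
  simp_rw [this, sqd, Fin.sum_univ_three]
  ring

/-- dot product with a shift -/
def dt (m d x : Fin 3 → ℝ) : ℝ := ∑ j, (x j - m j) * d j

lemma contDiff_dt (m d : Fin 3 → ℝ) {n : WithTop ℕ∞} : ContDiff ℝ n (dt m d) := by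
  unfold dt; fun_prop

lemma grad3_dt (m d x : Fin 3 → ℝ) (i : Fin 3) : grad3 (dt m d) x i = d i := by
  have h : HasFDerivAt (dt m d) (∑ j, d j •
      (ContinuousLinearMap.proj j : (Fin 3 → ℝ) →L[ℝ] ℝ)) x := by
    unfold dt
    refine HasFDerivAt.fun_sum fun j _ => ?_
    exact ((hasFDerivAt_apply j x).sub_const _).mul_const (d j)
  rw [grad3, h.fderiv]
  simp [Pi.single_apply]

lemma lap3_dt (m d x : Fin 3 → ℝ) : lap3 (dt m d) x = 0 := by
  simp [lap3, grad3_dt, grad3_const]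

lemma lap3_dt_sq (m d x : Fin 3 → ℝ) :
    lap3 (fun y => dt m d y * dt m d y) x = 2 * ∑ j, d j ^ 2 := by
  unfold lap3
  have hd : ∀ x, DifferentiableAt ℝ (dt m d) x := fun x =>
    (contDiff_dt m d (n := 1)).differentiable one_ne_zero x
  have : ∀ i, (fun y => grad3 (fun y => dt m d y * dt m d y) y i) =
      fun y => (2 * d i) * dt m d y := by
    intro i; funext y
    rw [grad3_mul (hd y) (hd y), grad3_dt]; ring
  simp_rw [this, grad3_const_mul (hd x), grad3_dt]
  rw [Finset.mul_sum]
  exact Finset.sum_congr rfl fun i _ => by ring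

/-- reflection (linear part) -/
noncomputable def reflL (d : Fin 3 → ℝ) : (Fin 3 → ℝ) →L[ℝ] (Fin 3 → ℝ) :=
  ContinuousLinearMap.id ℝ _ - (2 / ∑ j, d j ^ 2) •
    (∑ j, d j • (ContinuousLinearMap.proj j : (Fin 3 → ℝ) →L[ℝ] ℝ)).smulRight d

lemma reflL_apply (d x : Fin 3 → ℝ) (k : Fin 3) :
    reflL d x k = x k - 2 / (∑ j, d j ^ 2) * (∑ j, d j * x j) * d k := by
  simp [reflL]; ring

theorem WH.halfball {U : Set (Fin 3 → ℝ)} (hU : IsOpen U) {h : (Fin 3 → ℝ) → ℝ} (hh : WH U h)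
    {p y m : Fin 3 → ℝ} {l a : ℝ} (hl : 0 < l) (ha : 0 < a)
    (hm : ∀ j, m j = (p j + y j) / 2)
    (hd : sqd p y = l ^ 2) (hla : l ≤ a)
    (hball : ∀ x, sqd m x ≤ a ^ 2 → x ∈ U ∧ 0 ≤ h x ∧ h x ≤ 1) :
    h p - 3 * l / a ≤ h y := by
  obtain ⟨d, hddef⟩ : ∃ d : Fin 3 → ℝ, d = fun j => y j - p j := ⟨_, rfl⟩
  obtain ⟨D, hD⟩ : ∃ D, D = ∑ j, d j ^ 2 := ⟨_, rfl⟩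
  have hDl : D = l ^ 2 := by rw [hD, hddef]; exact hd
  have hD3 : D = d 0 ^ 2 + d 1 ^ 2 + d 2 ^ 2 := by rw [hD, Fin.sum_univ_three]
  have hDpos : 0 < D := by rw [hDl]; positivity
  set b : Fin 3 → ℝ := fun k => 2 / D * (∑ j, d j * m j) * d k with hb
  set T : (Fin 3 → ℝ) → (Fin 3 → ℝ) := fun x => reflL d x + b with hT
  have hTx : ∀ x k, T x k = x k - 2 / D * dt m d x * d k := by
    intro x k
    simp only [hT, Pi.add_apply, reflL_apply, hb, dt, Fin.sum_univ_three, ← hD]; ring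
  have hsqT : ∀ x, sqd m (T x) = sqd m x := by
    intro x
    have e : sqd m (T x) = sqd m x - 4 / D * dt m d x ^ 2 + 4 / D ^ 2 * dt m d x ^ 2 * D := by
      simp only [sqd, hTx, Fin.sum_univ_three]
      have e0 : dt m d x = (x 0 - m 0) * d 0 + (x 1 - m 1) * d 1 + (x 2 - m 2) * d 2 := by
        simp [dt, Fin.sum_univ_three]
      generalize dt m d x = t at *
      linear_combination (-(4 / D ^ 2 * t ^ 2)) * hD3 + (4 / D * t) * e0
    rw [e]; field_simp; ring
  have hinv : ∀ x, reflL d (reflL d x) = x := by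
    intro x; funext k
    have e : ∑ j, d j * reflL d x j = - ∑ j, d j * x j := by
      have : ∑ j, d j * reflL d x j =
          ∑ j, d j * x j - 2 / D * (∑ j, d j * x j) * D := by
        simp only [reflL_apply, ← hD]
        simp only [Fin.sum_univ_three]
        linear_combination (2 / D * (d 0 * x 0 + d 1 * x 1 + d 2 * x 2)) * hD3
      rw [this]; field_simp; ring
    rw [reflL_apply, e, reflL_apply]; ring
  have horth : ∀ j k, ∑ i, reflL d (Pi.single i 1) j * reflL d (Pi.single i 1) k =
      if j = k then (1:ℝ) else 0 := by
    intro j k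
    have e1 : ∀ i k, reflL d (Pi.single i 1) k = (if k = i then 1 else 0) - 2 / D * d i * d k := by
      intro i k
      rw [reflL_apply]
      simp [Pi.single_apply, ← hD]
    simp_rw [e1]
    have e2 : ∑ i, ((if j = i then (1:ℝ) else 0) - 2 / D * d i * d j) *
        ((if k = i then (1:ℝ) else 0) - 2 / D * d i * d k) =
        (∑ i, (if j = i then (1:ℝ) else 0) * (if k = i then (1:ℝ) else 0)) - 4 / D * d j * d k +
          4 / D ^ 2 * D * d j * d k := by
      have e4 : ∑ i, ((if j = i then (1:ℝ) else 0) - 2 / D * d i * d j) *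
        ((if k = i then (1:ℝ) else 0) - 2 / D * d i * d k) =
        (∑ i, (if j = i then (1:ℝ) else 0) * (if k = i then (1:ℝ) else 0))
          - 2 / D * d k * (∑ i, (if j = i then (1:ℝ) else 0) * d i)
          - 2 / D * d j * (∑ i, (if k = i then (1:ℝ) else 0) * d i)
          + 4 / D ^ 2 * d j * d k * ∑ i, d i ^ 2 := by
        simp only [Finset.mul_sum, ← Finset.sum_sub_distrib, ← Finset.sum_add_distrib]
        exact Finset.sum_congr rfl fun i _ => by ring
      have e5 : ∀ j, (∑ i, (if j = i then (1:ℝ) else 0) * d i) = d j := by intro j; simp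
      rw [e4, e5, e5, ← hD]; ring
    rw [e2]
    have e3 : (∑ i, (if j = i then (1:ℝ) else 0) * (if k = i then (1:ℝ) else 0)) =
        if j = k then 1 else 0 := by
      simp [eq_comm]
    rw [e3]; field_simp; ring
  set V : Set (Fin 3 → ℝ) := {x | sqd m x < a ^ 2} with hV
  have hVo : IsOpen V := isOpen_lt (contDiff_sqd m (n := 1)).continuous continuous_const
  have hVU : V ⊆ U := fun x hx => (hball x (le_of_lt hx)).1
  have w1 : WH V h := hh.mono hVU
  have w2 : WH V (fun x => h (reflL d x + b)) := by
    refine hh.comp_affine hU (reflL d) (reflL d) hinv hinv 1 horth b ?_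
    intro x hx
    apply hVU
    change sqd m (T x) < a ^ 2
    rw [hsqT]; exact hx
  have hu := w1.sub hVo w2
  set u : (Fin 3 → ℝ) → ℝ := fun x => h x - h (reflL d x + b) with hudef
  set s : (Fin 3 → ℝ) → ℝ := fun x =>
    ((4 / (a ^ 2 * D)) * (dt m d x * dt m d x) - (4 / (a * l)) * dt m d x) - (1 / a ^ 2) * sqd m x
    with hsdef
  have c1 : ContDiff ℝ 2 (fun x => dt m d x * dt m d x) := (contDiff_dt m d).mul (contDiff_dt m d)
  have c1' : ContDiff ℝ 2 (fun x => (4 / (a ^ 2 * D)) * (dt m d x * dt m d x)) :=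
    contDiff_const.mul c1
  have c2 : ContDiff ℝ 2 (fun x => (4 / (a * l)) * dt m d x) :=
    contDiff_const.mul (contDiff_dt m d)
  have c3 : ContDiff ℝ 2 (fun x => (1 / a ^ 2) * sqd m x) := contDiff_const.mul (contDiff_sqd m)
  have hs : ContDiff ℝ 2 s := (c1'.sub c2).sub c3
  have hlap : ∀ x, lap3 s x = 2 / a ^ 2 := by
    intro x
    rw [hsdef, lap3_sub (c1'.sub c2) c3, lap3_sub c1' c2, lap3_const_mul c1,
      lap3_const_mul (contDiff_dt m d), lap3_const_mul (contDiff_sqd m), lap3_sqd, lap3_dt,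
      lap3_dt_sq, ← hD]
    field_simp; ring
  set Q : Set (Fin 3 → ℝ) := {x | sqd m x ≤ a ^ 2 ∧ 0 ≤ dt m d x} with hQ
  have hQc : IsCompact Q := by
    refine Metric.isCompact_of_isClosed_isBounded ?_ ?_
    · simp only [hQ, ofPred_and]
      exact IsClosed.inter (isClosed_le (contDiff_sqd m (n := 1)).continuous continuous_const)
        (isClosed_le continuous_const (contDiff_dt m d (n := 1)).continuous)
    · refine (Metric.isBounded_closedBall (x := m) (r := a)).subset ?_
      intro x hx
      rw [Metric.mem_closedBall, dist_pi_le_iff ha.le]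
      intro i
      have h4 : (x i - m i)^2 ≤ sqd m x :=
        Finset.single_le_sum (f := fun j => (x j - m j)^2) (fun j _ => sq_nonneg _)
          (Finset.mem_univ i)
      rw [Real.dist_eq]
      exact abs_le_of_sq_le_sq (h4.trans hx.1) ha.le
  have hucont : ContinuousOn u Q := by
    have k1 : ContinuousOn h U := hh.1.continuousOn
    refine ContinuousOn.sub (k1.mono fun x hx => (hball x hx.1).1) ?_
    refine k1.comp (((reflL d).continuous.add continuous_const).continuousOn) ?_
    intro x hx
    refine (hball (T x) ?_).1
    rw [hsqT]; exact hx.1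
  have hub : ∀ x, sqd m x ≤ a ^ 2 → -1 ≤ u x := by
    intro x hx
    have k1 := hball x hx
    have k2 := hball (T x) (by rw [hsqT]; exact hx)
    have k3 : u x = h x - h (T x) := rfl
    rw [k3]; linarith [k1.2.1, k2.2.2]
  have hdty : dt m d y = D / 2 := by
    rw [hD3]
    simp only [dt, hm, hddef, Fin.sum_univ_three]; ring
  have hsqy : sqd m y = D / 4 := by
    rw [hD3]
    simp only [sqd, hm, hddef, Fin.sum_univ_three]; ring
  have hyQ : y ∈ Q := by
    refine ⟨?_, ?_⟩
    · rw [hsqy, hDl]; nlinarith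
    · rw [hdty]; positivity
  have hTy : T y = p := by
    funext k
    rw [hTx, hdty]
    have : 2 / D * (D / 2) = 1 := by field_simp
    rw [this]; simp [hddef]
  have key : s y ≤ u y := by
    obtain ⟨z, hz, hmin⟩ := hQc.exists_isMinOn ⟨y, hyQ⟩ (hucont.sub hs.continuous.continuousOn)
    have hmin' : ∀ x ∈ Q, u z - s z ≤ u x - s x := fun x hx => hmin hx
    suffices s z ≤ u z by linarith [hmin' y hyQ]
    by_contra hneg
    push Not at hneg
    have hsq0 : 0 ≤ sqd m z := Finset.sum_nonneg fun j _ => sq_nonneg _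
    rcases eq_or_lt_of_le hz.2 with h0 | h0
    · have : T z = z := by
        funext k; rw [hTx, ← h0]; ring
      have hu0 : u z = 0 := by
        change h z - h (T z) = 0
        rw [this]; ring
      have : s z = - ((1 / a ^ 2) * sqd m z) := by simp only [hsdef, ← h0]; ring
      have : 0 ≤ (1 / a ^ 2) * sqd m z := by positivity
      linarith
    · rcases eq_or_lt_of_le hz.1 with h1 | h1
      · have hCS : dt m d z ^ 2 ≤ sqd m z * D := by
          rw [hD]; exact Finset.sum_mul_sq_le_sq_mul_sq _ _ _
        rw [h1, hDl] at hCS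
        have hle : dt m d z ≤ a * l := by
          apply le_of_sq_le_sq _ (by positivity)
          calc _ ≤ _ := hCS
            _ = _ := by ring
        have : s z = - (4 / (a * l) * dt m d z * (1 - dt m d z / (a * l))) - 1 := by
          simp only [hsdef, h1, hDl]; field_simp; ring
        have h3 : dt m d z / (a * l) ≤ 1 := by rw [div_le_one (by positivity)]; exact hle
        have h4 : 0 ≤ 4 / (a * l) * dt m d z * (1 - dt m d z / (a * l)) :=
          mul_nonneg (by positivity) (by linarith)
        have := hub z hz.1
        linarith
      · refine hu.not_localMin hVo hs h1 (by rw [hlap]; positivity) ?_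
        have e1 : ∀ᶠ x in 𝓝 z, sqd m x < a ^ 2 := hVo.mem_nhds h1
        have e2 : ∀ᶠ x in 𝓝 z, 0 < dt m d x :=
          (contDiff_dt m d (n := 1)).continuous.continuousAt.eventually (lt_mem_nhds h0)
        filter_upwards [e1, e2] with x hx1 hx2
        exact hmin' x ⟨hx1.le, hx2.le⟩
  have huy : u y = h y - h p := by
    change h y - h (T y) = _
    rw [hTy]
  have hsy : s y = l ^ 2 / a ^ 2 - 2 * l / a - l ^ 2 / (4 * a ^ 2) := by
    simp only [hsdef, hdty, hsqy, hDl]; field_simp; ring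
  have : -(3 * l / a) ≤ s y := by
    rw [hsy]
    have : 0 ≤ l / a := by positivity
    have e : l ^ 2 / a ^ 2 - 2 * l / a - l ^ 2 / (4 * a ^ 2) = (3/4) * (l / a)^2 - 2 * (l / a) := by
      field_simp; ring
    rw [e]
    have : 3 * l / a = 3 * (l / a) := by ring
    rw [this]; nlinarith [sq_nonneg (l/a)]
  rw [huy] at key
  linarith

/-- closed-laterally cylinder -/
def Cyl (K : ℝ) : Set (Fin 3 → ℝ) := {x | (x 0)^2 + (x 1)^2 ≤ 1 ∧ K < x 2}

/-- continuous up to the lateral boundary, weakly harmonic, Neumann -/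
def Nice (K : ℝ) (h : (Fin 3 → ℝ) → ℝ) : Prop :=
  ContinuousOn h (Cyl K) ∧ WH (cylFrom K) h ∧
    ∀ x, (x 0)^2 + (x 1)^2 = 1 → K < x 2 → Neu h x

/-- growth constant -/
noncomputable def c0 : ℝ := (1/4) * (Real.exp (-2304) - Real.exp (-4608))

lemma c0_pos : 0 < c0 := by
  have : Real.exp (-4608) < Real.exp (-2304) := Real.exp_lt_exp.2 (by norm_num)
  unfold c0; linarith

lemma c0_lt : c0 < 1 := by
  have h1 : Real.exp (-2304) < 1 := by rw [Real.exp_lt_one_iff]; norm_num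
  have h2 := Real.exp_pos (-4608)
  unfold c0; linarith

lemma sqd_expand (p x : Fin 3 → ℝ) :
    sqd p x = (x 0 - p 0)^2 + (x 1 - p 1)^2 + (x 2 - p 2)^2 := by
  simp [sqd, Fin.sum_univ_three]

lemma growth {K T : ℝ} {h : (Fin 3 → ℝ) → ℝ} (hn : Nice K h) (hT : K < T - 2)
    (hb : ∀ x ∈ Dbar (T - 2) (T + 2), 0 ≤ h x ∧ h x ≤ 1) (hp : 1/2 ≤ h ![0, 0, T]) :
    ∀ x ∈ Dbar (T - 1) (T + 1), c0 ≤ h x := by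
  obtain ⟨hc, hw, hN⟩ := hn
  obtain ⟨p, hpd⟩ : ∃ p : Fin 3 → ℝ, p = ![0, 0, T] := ⟨_, rfl⟩
  have p0 : p 0 = 0 := by simp [hpd]
  have p1 : p 1 = 0 := by simp [hpd]
  have p2 : p 2 = T := by simp [hpd]
  rw [← hpd] at hp
  have hsub : Dint (T - 2) (T + 2) ⊆ cylFrom K := fun x hx => ⟨hx.1, by linarith [hx.2.1]⟩
  have hball : ∀ y, sqd p y ≤ (1/24)^2 → 1/4 ≤ h y := by
    intro y hy
    have hnn : 0 ≤ sqd p y := Finset.sum_nonneg fun j _ => sq_nonneg _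
    rcases eq_or_lt_of_le hnn with h0 | h0
    · have : y = p := by
        funext j
        have h4 : (y j - p j)^2 ≤ sqd p y :=
          Finset.single_le_sum (f := fun j => (y j - p j)^2) (fun j _ => sq_nonneg _)
            (Finset.mem_univ j)
        have : (y j - p j)^2 = 0 := le_antisymm (by linarith) (sq_nonneg _)
        have := pow_eq_zero_iff (two_ne_zero) |>.1 this
        linarith
      rw [this]; linarith
    · have hl := Real.sqrt_pos.2 h0
      have hle : Real.sqrt (sqd p y) ≤ 1/24 := by
        rw [show (1/24 : ℝ) = Real.sqrt ((1/24)^2) by rw [Real.sqrt_sq]; norm_num]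
        exact Real.sqrt_le_sqrt hy
      have := hw.halfball (isOpen_cylFrom K) (p := p) (y := y) (m := fun j => (p j + y j)/2)
        (l := Real.sqrt (sqd p y)) (a := 1/2) hl (by norm_num) (fun j => rfl)
        (Real.sq_sqrt hnn).symm (by linarith) (by
          intro x hx
          have hxD : x ∈ Dint (T - 2) (T + 2) := by
            rw [sqd_expand] at hx hy
            simp only [p0, p1, p2, zero_add, sub_zero] at hx hy
            have g0 := sq_nonneg ((x 0 - y 0 / 2) - y 0 / 2)
            have g1 := sq_nonneg ((x 1 - y 1 / 2) - y 1 / 2)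
            have g2 := sq_nonneg ((x 2 - (T + y 2) / 2))
            have g3 := sq_nonneg (y 2 - T)
            have g4 := sq_nonneg ((x 0 - y 0 / 2))
            have g5 := sq_nonneg ((x 1 - y 1 / 2))
            have g6 := sq_nonneg (y 0)
            have g7 := sq_nonneg (y 1)
            have q1 : |x 2 - (T + y 2)/2| ≤ 1/2 := abs_le_of_sq_le_sq (by linarith) (by norm_num)
            have q2 : |y 2 - T| ≤ 1/24 := abs_le_of_sq_le_sq (by linarith) (by norm_num)
            rw [abs_le] at q1 q2
            refine ⟨?_, by linarith [q1.1, q2.1], by linarith [q1.2, q2.2]⟩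
            nlinarith
          exact ⟨hsub hxD, hb x ⟨hxD.1.le, hxD.2.1.le, hxD.2.2.le⟩⟩)
      have e : 3 * Real.sqrt (sqd p y) / (1/2) = 6 * Real.sqrt (sqd p y) := by ring
      rw [e] at this
      linarith
  obtain ⟨s, hs⟩ : ∃ s : (Fin 3 → ℝ) → ℝ, s = fun x =>
    (1/4) * ebar 1152 p x - (1/4) * Real.exp (-4608) := ⟨_, rfl⟩
  have ce : ContDiff ℝ 2 (fun x => (1/4) * ebar 1152 p x) :=
    contDiff_const.mul (contDiff_ebar _ _)
  have hsc : ContDiff ℝ 2 s := by rw [hs]; exact ce.sub contDiff_const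
  have hgr : ∀ x i, grad3 s x i = (1/4) * (-2 * 1152 * (x i - p i) * ebar 1152 p x) := by
    intro x i
    rw [hs, grad3_sub (ce.differentiable two_ne_zero x) (differentiableAt_const _),
      grad3_const_mul ((contDiff_ebar 1152 p (n := 1)).differentiable one_ne_zero x), grad3_ebar,
      grad3_const]
    ring
  have hlap : ∀ x, lap3 s x = (1/4) * ((4 * 1152^2 * sqd p x - 6 * 1152) * ebar 1152 p x) := by
    intro x
    rw [hs, lap3_sub ce contDiff_const, lap3_const_mul (contDiff_ebar _ _), lap3_ebar]
    simp [lap3, grad3_const]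
  have hepos : ∀ x, 0 < ebar 1152 p x := fun x => Real.exp_pos _
  have hcmp := MPcyl (a := T - 2) (b := T + 2) (u := h) (s := s)
    (hc.mono fun x hx => ⟨hx.1, by linarith [hx.2.1]⟩) (hw.mono hsub) hsc
    (by
      intro x hx hlt
      rw [hlap]
      have h1 : (1/24)^2 < sqd p x := by
        by_contra hcon
        push Not at hcon
        have h2 := hball x hcon
        have h3 : ebar 1152 p x ≤ 1 := by
          rw [ebar, Real.exp_le_one_iff]
          have hnn : 0 ≤ sqd p x := Finset.sum_nonneg fun j _ => sq_nonneg _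
          linarith
        have h4 := Real.exp_pos (-4608)
        rw [hs] at hlt
        simp only at hlt
        linarith
      have := hepos x
      have h5 : 0 < 4 * 1152^2 * sqd p x - 6 * 1152 := by linarith
      positivity)
    (by
      intro x hx h1 h2
      refine Or.inr ⟨hN x hx (by linarith), ?_⟩
      rw [hgr, hgr, p0, p1]
      have := hepos x
      have e : x 0 * ((1/4) * (-2 * 1152 * (x 0 - 0) * ebar 1152 p x)) +
        x 1 * ((1/4) * (-2 * 1152 * (x 1 - 0) * ebar 1152 p x)) =
        - (576 * ((x 0)^2 + (x 1)^2) * ebar 1152 p x) := by ring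
      rw [e, hx]; linarith)
    (by
      intro x hx hor
      have h4 : 4 ≤ sqd p x := by
        rw [sqd_expand, p2]
        rcases hor with h | h <;> rw [h] <;> nlinarith [sq_nonneg (x 0 - p 0), sq_nonneg (x 1 - p 1)]
      have : ebar 1152 p x ≤ Real.exp (-4608) := Real.exp_le_exp.2 (by linarith)
      have := (hb x hx).1
      rw [hs]; simp only; linarith)
  intro x hx
  refine le_trans ?_ (hcmp x ⟨hx.1, by linarith [hx.2.1], by linarith [hx.2.2]⟩)
  have h4 : sqd p x ≤ 2 := by
    rw [sqd_expand, p0, p1, p2]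
    have := hx.1
    have h5 : (x 2 - T)^2 ≤ 1 := by nlinarith [hx.2.1, hx.2.2]
    linarith
  have : Real.exp (-2304) ≤ ebar 1152 p x := Real.exp_le_exp.2 (by linarith)
  rw [hs]; unfold c0; simp only; linarith

lemma Nice.affine {K : ℝ} {h : (Fin 3 → ℝ) → ℝ} (hn : Nice K h) (a b : ℝ) :
    Nice K (fun x => a * h x + b) := by
  obtain ⟨hc, hw, hN⟩ := hn
  refine ⟨(continuousOn_const.mul hc).add continuousOn_const,
    (hw.const_mul (isOpen_cylFrom K) a).add_const b, ?_⟩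
  intro x h1 h2
  have := ((hN x h1 h2).const_mul a).add_const b
  simpa [Neu] using this

lemma PL {K T c : ℝ} {h : (Fin 3 → ℝ) → ℝ} (hn : Nice K h) (hT : K < T) (hc0 : 0 ≤ c)
    (hb : ∀ x ∈ Cyl K, T ≤ x 2 → 0 ≤ h x) (hTc : ∀ x ∈ Cyl K, x 2 = T → c ≤ h x) :
    ∀ x ∈ Cyl K, T ≤ x 2 → c ≤ h x := by
  obtain ⟨hc, hw, hN⟩ := hn
  obtain ⟨q, hq⟩ : ∃ q : Fin 3 → ℝ, q = ![0, 0, T] := ⟨_, rfl⟩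
  have q0 : q 0 = 0 := by simp [hq]
  have q1 : q 1 = 0 := by simp [hq]
  have q2 : q 2 = T := by simp [hq]
  obtain ⟨e, he⟩ : ∃ e : Fin 3 → ℝ, e = ![0, 0, 1] := ⟨_, rfl⟩
  have hdt : ∀ x, dt q e x = x 2 - T := by
    intro x; simp [dt, Fin.sum_univ_three, he, q2]
  have key : ∀ L κ : ℝ, 0 < L → 0 < κ → ∀ x ∈ Dbar T (T + L),
      c - c / L * (x 2 - T) - κ * sqd q x + 4 * κ * (x 2 - T)^2 - 3 * κ * L^2 ≤ h x := by
    intro L κ hL hκ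
    have c1 : ContDiff ℝ 2 (fun x => dt q e x * dt q e x) := (contDiff_dt q e).mul (contDiff_dt q e)
    have c1' : ContDiff ℝ 2 (fun x => (4 * κ) * (dt q e x * dt q e x)) := contDiff_const.mul c1
    have c2 : ContDiff ℝ 2 (fun x => (c / L) * dt q e x) := contDiff_const.mul (contDiff_dt q e)
    have c3 : ContDiff ℝ 2 (fun x => κ * sqd q x) := contDiff_const.mul (contDiff_sqd q)
    have c12 := c1'.sub c2
    have c123 := c12.sub c3
    obtain ⟨s, hs⟩ : ∃ s : (Fin 3 → ℝ) → ℝ, s = fun x =>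
      (((4 * κ) * (dt q e x * dt q e x) - (c / L) * dt q e x) - κ * sqd q x)
        - (3 * κ * L^2 - c) := ⟨_, rfl⟩
    have hsx : ∀ x, s x = c - c / L * (x 2 - T) - κ * sqd q x + 4 * κ * (x 2 - T)^2 -
        3 * κ * L^2 := by
      intro x; rw [hs]; simp only [hdt]; ring
    have hsc : ContDiff ℝ 2 s := by rw [hs]; exact c123.sub contDiff_const
    have hlap : ∀ x, lap3 s x = 2 * κ := by
      intro x
      rw [hs, lap3_sub c123 contDiff_const, lap3_sub c12 c3, lap3_sub c1' c2,
        lap3_const_mul c1, lap3_const_mul (contDiff_dt q e), lap3_const_mul (contDiff_sqd q),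
        lap3_sqd, lap3_dt, lap3_dt_sq]
      simp [lap3, grad3_const, he, Fin.sum_univ_three]
      ring
    have hgr : ∀ x i, e i = 0 → grad3 s x i = - (2 * κ * (x i - q i)) := by
      intro x i hi
      have d1 : DifferentiableAt ℝ (dt q e) x := (contDiff_dt q e (n := 1)).differentiable one_ne_zero x
      rw [hs, grad3_sub (c123.differentiable two_ne_zero x) (differentiableAt_const _),
        grad3_sub (c12.differentiable two_ne_zero x) (c3.differentiable two_ne_zero x),
        grad3_sub (c1'.differentiable two_ne_zero x) (c2.differentiable two_ne_zero x),
        grad3_const_mul (c1.differentiable two_ne_zero x), grad3_const_mul d1,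
        grad3_const_mul ((contDiff_sqd q (n := 1)).differentiable one_ne_zero x),
        grad3_mul d1 d1, grad3_dt, grad3_sqd, grad3_const, hi]
      ring
    intro x hx
    rw [← hsx]
    refine MPcyl (a := T) (b := T + L)
      (hc.mono ?_) (hw.mono ?_) hsc ?_ ?_ ?_ x hx
    · intro x hx; exact ⟨hx.1, by linarith [hx.2.1]⟩
    · intro x hx; exact ⟨hx.1, by linarith [hx.2.1]⟩
    · intro x hx _; rw [hlap]; positivity
    · intro x hx h1 h2
      refine Or.inr ⟨hN x hx (by linarith), ?_⟩
      rw [hgr x 0 (by simp [he]), hgr x 1 (by simp [he]), q0, q1]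
      have : x 0 * -(2 * κ * (x 0 - 0)) + x 1 * -(2 * κ * (x 1 - 0)) =
        - (2 * κ * ((x 0)^2 + (x 1)^2)) := by ring
      rw [this, hx]; linarith
    · intro x hx hor
      have hxC : x ∈ Cyl K := ⟨hx.1, by linarith [hx.2.1]⟩
      rw [hsx, sqd_expand, q0, q1, q2]
      rcases hor with h | h
      · have := hTc x hxC h
        have e1 : c - c / L * (x 2 - T) - κ * ((x 0 - 0)^2 + (x 1 - 0)^2 + (x 2 - T)^2) +
          4 * κ * (x 2 - T)^2 - 3 * κ * L^2 = c - (κ * ((x 0)^2 + (x 1)^2) + 3 * κ * L^2) := by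
          rw [h]; ring
        have e2 : 0 ≤ κ * ((x 0)^2 + (x 1)^2) + 3 * κ * L^2 := by positivity
        linarith
      · have := hb x hxC hx.2.1
        have e1 : c - c / L * (x 2 - T) - κ * ((x 0 - 0)^2 + (x 1 - 0)^2 + (x 2 - T)^2) +
          4 * κ * (x 2 - T)^2 - 3 * κ * L^2 = - (κ * ((x 0)^2 + (x 1)^2)) := by
          rw [h]; field_simp; ring
        have e2 : 0 ≤ κ * ((x 0)^2 + (x 1)^2) := by positivity
        linarith
  intro x hx hxT
  refine le_of_forall_pos_le_add fun ε hε => ?_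
  obtain ⟨L, hL⟩ : ∃ L : ℝ, L = (x 2 - T) + 1 + 2 * c * (x 2 - T) / ε := ⟨_, rfl⟩
  have hz : 0 ≤ x 2 - T := by linarith
  have hq0 : 0 ≤ 2 * c * (x 2 - T) / ε := by positivity
  have hLpos : 0 < L := by linarith
  obtain ⟨κ, hκ⟩ : ∃ κ : ℝ, κ = ε / 2 / (1 + 3 * L^2) := ⟨_, rfl⟩
  have hκpos : 0 < κ := by rw [hκ]; positivity
  have := key L κ hLpos hκpos x ⟨hx.1, hxT, by linarith⟩
  rw [sqd_expand, q0, q1, q2] at this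
  have a1 : c / L * (x 2 - T) ≤ ε / 2 := by
    rw [div_mul_eq_mul_div, div_le_iff₀ hLpos]
    have : 2 * c * (x 2 - T) / ε ≤ L := by linarith
    rw [div_le_iff₀ hε] at this
    linarith
  have a2 : κ * (1 + 3 * L^2) = ε / 2 := by rw [hκ]; field_simp
  have a3 : κ * ((x 0)^2 + (x 1)^2) ≤ κ * 1 := by gcongr; exact hx.1
  have a4 : 0 ≤ κ * (x 2 - T)^2 := by positivity
  nlinarith

lemma osc_step {K t lo ω : ℝ} {h : (Fin 3 → ℝ) → ℝ} (hn : Nice K h) (ht : K < t) (hω : 0 < ω)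
    (hb : ∀ x ∈ Cyl K, t ≤ x 2 → lo ≤ h x ∧ h x ≤ lo + ω) :
    ∃ lo', ∀ x ∈ Cyl K, t + 2 ≤ x 2 → lo' ≤ h x ∧ h x ≤ lo' + (1 - c0) * ω := by
  have main : ∀ g : (Fin 3 → ℝ) → ℝ, Nice K g → (∀ x ∈ Cyl K, t ≤ x 2 → 0 ≤ g x ∧ g x ≤ 1) →
      1/2 ≤ g ![0, 0, t + 2] → ∀ x ∈ Cyl K, t + 2 ≤ x 2 → c0 ≤ g x := by
    intro g hg hgb hgp
    have h1 := growth (T := t + 2) hg (by linarith) (fun x hx =>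
      hgb x ⟨hx.1, by linarith [hx.2.1]⟩ (by linarith [hx.2.1])) hgp
    refine PL hg (by linarith) c0_pos.le (fun x hx hx2 => (hgb x hx (by linarith)).1) ?_
    intro x hx hx2
    exact h1 x ⟨hx.1, by linarith, by linarith⟩
  have hlo : ∀ x, ω⁻¹ * h x + (- (ω⁻¹ * lo)) = (h x - lo) / ω := fun x => by field_simp; ring
  have hup : ∀ x, -ω⁻¹ * h x + (1 + ω⁻¹ * lo) = (lo + ω - h x) / ω := fun x => by field_simp; ring
  rcases le_total (1/2) ((h ![0, 0, t + 2] - lo) / ω) with hcase | hcase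
  · have := main _ (hn.affine ω⁻¹ (-(ω⁻¹ * lo))) (by
      intro x hx hx2
      have := hb x hx hx2
      rw [hlo, div_le_one hω]
      exact ⟨div_nonneg (by linarith) hω.le, by linarith⟩) (by rw [hlo]; exact hcase)
    refine ⟨lo + c0 * ω, fun x hx hx2 => ?_⟩
    have h1 := this x hx hx2
    rw [hlo, le_div_iff₀ hω] at h1
    have h2 := (hb x hx (by linarith)).2
    constructor <;> linarith
  · have := main _ (hn.affine (-ω⁻¹) (1 + ω⁻¹ * lo)) (by
      intro x hx hx2
      have := hb x hx hx2
      rw [hup, div_le_one hω]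
      exact ⟨div_nonneg (by linarith) hω.le, by linarith⟩) (by
        rw [hup]
        have : (lo + ω - h ![0, 0, t + 2]) / ω = 1 - (h ![0, 0, t + 2] - lo) / ω := by
          field_simp; ring
        rw [this]; linarith)
    refine ⟨lo, fun x hx hx2 => ?_⟩
    have h1 := this x hx hx2
    rw [hup, le_div_iff₀ hω] at h1
    have h2 := (hb x hx (by linarith)).1
    constructor <;> linarith

lemma osc_iter {K B : ℝ} {h : (Fin 3 → ℝ) → ℝ} (hn : Nice K h) (hB : 0 < B)
    (hb : ∀ x ∈ Cyl K, |h x| ≤ B) (t : ℝ) (ht : K < t) (n : ℕ) :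
    ∃ lo, ∀ x ∈ Cyl K, t + 2 * n ≤ x 2 → lo ≤ h x ∧ h x ≤ lo + (1 - c0)^n * (2 * B) := by
  have hθ : 0 < 1 - c0 := by linarith [c0_lt]
  induction n with
  | zero =>
    refine ⟨-B, fun x hx _ => ?_⟩
    have := abs_le.1 (hb x hx)
    simp only [pow_zero]
    constructor <;> linarith
  | succ n ih =>
    obtain ⟨lo, hlo⟩ := ih
    obtain ⟨lo', h'⟩ := osc_step (t := t + 2 * n) hn (by
      have : (0:ℝ) ≤ n := n.cast_nonneg
      linarith) (by positivity) hlo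
    refine ⟨lo', fun x hx hx2 => ?_⟩
    have := h' x hx (by push_cast at hx2; linarith)
    rw [pow_succ]
    constructor <;> nlinarith [this.1, this.2]

/-- decay rate -/
noncomputable def d0 : ℝ := - Real.log (1 - c0) / 2

lemma d0_pos : 0 < d0 := by
  have : Real.log (1 - c0) < 0 := Real.log_neg (by linarith [c0_lt]) (by linarith [c0_pos])
  unfold d0; linarith

/-- decay constant -/
noncomputable def C0 : ℝ := 2 * (1 - c0)⁻¹

lemma C0_pos : 0 < C0 := by
  have : 0 < 1 - c0 := by linarith [c0_lt]
  unfold C0; positivity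

theorem osc_decay {K B : ℝ} {h : (Fin 3 → ℝ) → ℝ} (hn : Nice K h) (hB : 0 < B)
    (hb : ∀ x ∈ Cyl K, |h x| ≤ B) {x y : Fin 3 → ℝ} {z : ℝ} (hx : x ∈ Cyl K) (hy : y ∈ Cyl K)
    (hz : K < z) (hxz : z ≤ x 2) (hyz : z ≤ y 2) :
    |h x - h y| ≤ C0 * B * Real.exp (-d0 * (z - K)) := by
  have hθ : 0 < 1 - c0 := by linarith [c0_lt]
  obtain ⟨k, hk⟩ : ∃ k : ℕ, ⌈(z - K) / 2⌉₊ = k + 1 := by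
    refine Nat.exists_eq_succ_of_ne_zero ?_
    exact (Nat.ceil_pos.2 (by linarith)).ne'
  have h1 := Nat.ceil_lt_add_one (a := (z - K) / 2) (by linarith)
  have h2 := Nat.le_ceil ((z - K) / 2)
  rw [hk] at h1 h2
  push_cast at h1 h2
  obtain ⟨lo, hlo⟩ := osc_iter hn hB hb (z - 2 * k) (by linarith) k
  have e1 := hlo x hx (by linarith)
  have e2 := hlo y hy (by linarith)
  have e3 : |h x - h y| ≤ (1 - c0)^k * (2 * B) := by
    rw [abs_le]; constructor <;> linarith
  refine e3.trans ?_
  have e4 : (1 - c0)^k ≤ (1 - c0)⁻¹ * Real.exp (-d0 * (z - K)) := by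
    have : (1 - c0)^k * (1 - c0) ≤ Real.exp (-d0 * (z - K)) := by
      rw [← pow_succ, ← Real.exp_log (pow_pos hθ (k+1)), Real.log_pow]
      apply Real.exp_le_exp.2
      have hd := d0_pos
      have : Real.log (1 - c0) = - 2 * d0 := by unfold d0; ring
      rw [this]; push_cast
      nlinarith
    rw [inv_mul_eq_div, le_div_iff₀ hθ]; exact this
  have : (1 - c0)^k * (2 * B) ≤ (1 - c0)⁻¹ * Real.exp (-d0 * (z - K)) * (2 * B) := by gcongr
  refine this.trans (le_of_eq ?_)
  unfold C0; ring

/-- closed cylinder -/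
def Scl (K : ℝ) : Set (Fin 3 → ℝ) := {x | (x 0)^2 + (x 1)^2 ≤ 1 ∧ K ≤ x 2}

lemma isClosed_Scl (K : ℝ) : IsClosed (Scl K) := by
  simp only [Scl, ofPred_and]
  refine IsClosed.inter (isClosed_le ?_ ?_) (isClosed_le ?_ ?_) <;> fun_prop

lemma cylFrom_subset_Scl (K : ℝ) : cylFrom K ⊆ Scl K := fun _ hx => ⟨hx.1.le, hx.2.le⟩

lemma Cyl_subset_Scl (K : ℝ) : Cyl K ⊆ Scl K := fun _ hx => ⟨hx.1, hx.2.le⟩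

lemma cylFrom_subset_Cyl (K : ℝ) : cylFrom K ⊆ Cyl K := fun _ hx => ⟨hx.1.le, hx.2⟩

lemma closure_cylFrom (K : ℝ) : closure (cylFrom K) = Scl K := by
  apply Subset.antisymm
  · exact closure_minimal (cylFrom_subset_Scl K) (isClosed_Scl K)
  · intro x hx
    have hc : Continuous (fun t : ℝ => (![t * x 0, t * x 1, x 2 + (1 - t)] : Fin 3 → ℝ)) := by
      refine continuous_pi fun i => ?_
      fin_cases i <;> simp <;> fun_prop
    have ht : Tendsto (fun t : ℝ => (![t * x 0, t * x 1, x 2 + (1 - t)] : Fin 3 → ℝ)) (𝓝[<] 1)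
        (𝓝 x) := by
      have h1 := hc.tendsto 1
      have h2 : (![1 * x 0, 1 * x 1, x 2 + (1 - 1)] : Fin 3 → ℝ) = x := by
        funext i; fin_cases i <;> simp
      rw [h2] at h1
      exact h1.mono_left nhdsWithin_le_nhds
    refine mem_closure_of_tendsto ht ?_
    have : Ioo (0:ℝ) 1 ∈ 𝓝[<] (1:ℝ) := Ioo_mem_nhdsLT (by norm_num)
    filter_upwards [this] with t ht
    refine ⟨?_, ?_⟩
    · exact sc_sq_lt ht.1.le ht.2 hx.1
    · have := hx.2
      have := ht.2
      simp; linarith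

lemma convex_cylFrom (K : ℝ) : Convex ℝ (cylFrom K) := by
  rw [convex_iff_forall_pos]
  rintro x ⟨hx1, hx2⟩ y ⟨hy1, hy2⟩ a b ha hb hab
  refine ⟨?_, ?_⟩
  · simp only [Pi.add_apply, Pi.smul_apply, smul_eq_mul]
    have hb' : b = 1 - a := by linarith
    subst hb'
    have e : (a * x 0 + (1 - a) * y 0)^2 + (a * x 1 + (1 - a) * y 1)^2 =
      a * ((x 0)^2 + (x 1)^2) + (1 - a) * ((y 0)^2 + (y 1)^2)
        - a * (1 - a) * ((x 0 - y 0)^2 + (x 1 - y 1)^2) := by ring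
    rw [e]
    have : 0 ≤ a * (1 - a) * ((x 0 - y 0)^2 + (x 1 - y 1)^2) := by positivity
    nlinarith
  · simp only [Pi.add_apply, Pi.smul_apply, smul_eq_mul]
    have h1 := mul_lt_mul_of_pos_left hx2 ha
    have h2 := mul_lt_mul_of_pos_left hy2 hb
    have h3 : a * K + b * K = K := by rw [← add_mul, hab, one_mul]
    linarith

lemma uniqueDiffOn_Scl (K : ℝ) : UniqueDiffOn ℝ (Scl K) := by
  rw [← closure_cylFrom]
  refine uniqueDiffOn_convex (convex_cylFrom K).closure ?_
  refine ⟨![0, 0, K + 1], ?_⟩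
  refine interior_mono subset_closure ?_
  rw [(isOpen_cylFrom K).interior_eq]
  exact ⟨by simp, by simp⟩

/-- gradient up to the boundary -/
noncomputable def Gd (K : ℝ) (φ : (Fin 3 → ℝ) → ℝ) (x : Fin 3 → ℝ) : (Fin 3 → ℝ) →L[ℝ] ℝ :=
  fderivWithin ℝ φ (Scl K) x

lemma Gd_eq {K : ℝ} {φ : (Fin 3 → ℝ) → ℝ} {x : Fin 3 → ℝ} (hx : x ∈ cylFrom K) :
    Gd K φ x = fderiv ℝ φ x :=
  fderivWithin_of_mem_nhds
    (mem_of_superset ((isOpen_cylFrom K).mem_nhds hx) (cylFrom_subset_Scl K))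

lemma continuousOn_Gd {K : ℝ} {φ : (Fin 3 → ℝ) → ℝ} (hφ : ContDiffOn ℝ 1 φ (Scl K)) :
    ContinuousOn (Gd K φ) (Scl K) :=
  hφ.continuousOn_fderivWithin (uniqueDiffOn_Scl K) le_rfl

lemma neumann_aux {K : ℝ} {φ : (Fin 3 → ℝ) → ℝ} (hφ : ContDiffOn ℝ 1 φ (Scl K))
    (hw : ∀ ψ : (Fin 3 → ℝ) → ℝ, ContDiff ℝ 1 ψ → HasCompactSupport ψ →
        tsupport ψ ⊆ {x : Fin 3 → ℝ | K < x 2} →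
        ∫ x in cylFrom K, ∑ i, grad3 φ x i * grad3 ψ x i = 0)
    {b : Fin 3 → ℝ} (hb1 : (b 0)^2 + (b 1)^2 = 1) (hb2 : K < b 2) :
    Gd K φ b ![b 0, b 1, 0] ≤ 0 := by
  by_contra hcon
  push Not at hcon
  obtain ⟨ρ, hρ⟩ : ∃ ρ : ℝ, ρ = (b 2 - K) / 2 := ⟨_, rfl⟩
  have hρ0 : 0 < ρ := by rw [hρ]; linarith
  obtain ⟨q, hq⟩ : ∃ q : Fin 3 → ℝ, q = ![(1 + ρ) * b 0, (1 + ρ) * b 1, b 2] := ⟨_, rfl⟩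
  have q0 : q 0 = (1 + ρ) * b 0 := by simp [hq]
  have q1 : q 1 = (1 + ρ) * b 1 := by simp [hq]
  have q2 : q 2 = b 2 := by simp [hq]
  have hbS : b ∈ Scl K := ⟨hb1.le, hb2.le⟩
  have hgc : ContinuousOn (fun x => Gd K φ x (q - x)) (Scl K) :=
    (continuousOn_Gd hφ).clm_apply (continuousOn_const.sub continuousOn_id)
  have hgb : 0 < Gd K φ b (q - b) := by
    have : q - b = ρ • ![b 0, b 1, 0] := by
      funext i; fin_cases i <;> simp [hq] <;> ring
    rw [this, map_smul, smul_eq_mul]; positivity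
  have hev : ∀ᶠ x in 𝓝[Scl K] b, 0 < Gd K φ x (q - x) :=
    (hgc b hbS).eventually (lt_mem_nhds hgb)
  rw [eventually_nhdsWithin_iff, Metric.eventually_nhds_iff] at hev
  obtain ⟨η, hη, hev⟩ := hev
  obtain ⟨τ, hτ⟩ : ∃ τ : ℝ, τ = min (η^2) (ρ^2) := ⟨_, rfl⟩
  have hτ0 : 0 < τ := by rw [hτ]; positivity
  have hτη : τ ≤ η^2 := by rw [hτ]; exact min_le_left _ _
  have hτρ : τ ≤ ρ^2 := by rw [hτ]; exact min_le_right _ _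
  have hpos : ∀ x ∈ Scl K, sqd q x < ρ^2 + τ → 0 < Gd K φ x (q - x) := by
    intro x hx hlt
    refine hev ?_ hx
    have hsb : sqd b x < η^2 := by
      have e : sqd q x = sqd b x + 2 * ρ * (1 - (x 0 * b 0 + x 1 * b 1)) + ρ^2 := by
        rw [sqd_expand, sqd_expand, q0, q1, q2]
        linear_combination (2 * ρ + ρ ^ 2) * hb1
      have h3 : x 0 * b 0 + x 1 * b 1 ≤ 1 := by
        nlinarith [sq_nonneg (x 0 - b 0), sq_nonneg (x 1 - b 1), hx.1]
      have : 0 ≤ 2 * ρ * (1 - (x 0 * b 0 + x 1 * b 1)) := mul_nonneg (by positivity) (by linarith)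
      linarith
    rw [dist_pi_lt_iff hη]
    intro i
    have h4 : (x i - b i)^2 ≤ sqd b x :=
      Finset.single_le_sum (f := fun j => (x j - b j)^2) (fun j _ => sq_nonneg _)
        (Finset.mem_univ i)
    rw [Real.dist_eq]
    exact abs_lt_of_sq_lt_sq (by linarith) hη.le
  obtain ⟨F, hF1, hF0, hFz, hFp, hF'0, hF'z, hF'p⟩ := exists_bumpF
  obtain ⟨w, hwd⟩ : ∃ w : (Fin 3 → ℝ) → ℝ, w = fun x => (ρ^2 + τ) - sqd q x := ⟨_, rfl⟩
  have hwx : ∀ x, w x = (ρ^2 + τ) - sqd q x := fun x => by rw [hwd]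
  have hwc : ContDiff ℝ 1 w := by rw [hwd]; exact contDiff_const.sub (contDiff_sqd q)
  have hwg : ∀ x i, grad3 w x i = 2 * (q i - x i) := by
    intro x i
    rw [hwd, grad3_sub (differentiableAt_const _)
      ((contDiff_sqd q (n := 1)).differentiable one_ne_zero x), grad3_const, grad3_sqd]
    ring
  have hψc : ContDiff ℝ 1 (fun x => F (w x)) := hF1.comp hwc
  have hψg : ∀ x i, grad3 (fun x => F (w x)) x i = deriv F (w x) * (2 * (q i - x i)) := by
    intro x i
    rw [grad3_comp (hF1.differentiable one_ne_zero (w x)).hasDerivAt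
      (hwc.differentiable one_ne_zero x), hwg]
  obtain ⟨Bq, hBq⟩ : ∃ Bq : Set (Fin 3 → ℝ), Bq = {x | sqd q x ≤ ρ^2 + τ} := ⟨_, rfl⟩
  have hBc : IsClosed Bq := by
    rw [hBq]; exact isClosed_le (contDiff_sqd q (n := 1)).continuous continuous_const
  have hBco : IsCompact Bq := by
    refine Metric.isCompact_of_isClosed_isBounded hBc ?_
    refine (Metric.isBounded_closedBall (x := q) (r := 2 * ρ)).subset ?_
    intro x hx
    rw [hBq] at hx
    have hx : sqd q x ≤ ρ^2 + τ := hx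
    rw [Metric.mem_closedBall, dist_pi_le_iff (by positivity)]
    intro i
    have h4 : (x i - q i)^2 ≤ sqd q x :=
      Finset.single_le_sum (f := fun j => (x j - q j)^2) (fun j _ => sq_nonneg _)
        (Finset.mem_univ i)
    rw [Real.dist_eq]
    exact abs_le_of_sq_le_sq (by nlinarith) (by positivity)
  have hts : tsupport (fun x => F (w x)) ⊆ Bq := by
    refine closure_minimal ?_ hBc
    intro x hx
    rw [hBq]
    change sqd q x ≤ ρ^2 + τ
    by_contra hlt
    push Not at hlt
    exact hx (hFz _ (by rw [hwx]; linarith))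
  have hBK : Bq ⊆ {x | K < x 2} := by
    intro x hx
    rw [hBq] at hx
    have hx : sqd q x ≤ ρ^2 + τ := hx
    rw [sqd_expand, q2] at hx
    have h5 : (x 2 - b 2)^2 < (2 * ρ)^2 := by
      nlinarith [sq_nonneg (x 0 - q 0), sq_nonneg (x 1 - q 1)]
    have := (abs_lt.1 (abs_lt_of_sq_lt_sq h5 (by positivity))).1
    change K < x 2
    rw [hρ] at this; linarith
  have hzero := hw _ hψc (hBco.of_isClosed_subset (isClosed_tsupport _) hts) (hts.trans hBK)
  have hcyl : MeasurableSet (cylFrom K) := (isOpen_cylFrom K).measurableSet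
  have heq : ∀ x ∈ cylFrom K, ∑ i, grad3 φ x i * grad3 (fun x => F (w x)) x i =
      2 * deriv F (w x) * Gd K φ x (q - x) := by
    intro x hx
    rw [Gd_eq hx, fderiv_apply_eq_sum, Finset.mul_sum]
    refine Finset.sum_congr rfl fun i _ => ?_
    rw [hψg, Pi.sub_apply]; ring
  rw [setIntegral_congr_fun hcyl heq] at hzero
  have hfc : ContinuousOn (fun x => 2 * deriv F (w x) * Gd K φ x (q - x)) (Scl K) := by
    refine ContinuousOn.mul (Continuous.continuousOn ?_) hgc
    exact continuous_const.mul ((hF1.continuous_deriv le_rfl).comp hwc.continuous)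
  have hIntg : IntegrableOn (fun x => 2 * deriv F (w x) * Gd K φ x (q - x)) (cylFrom K) := by
    have h1 : IntegrableOn (fun x => 2 * deriv F (w x) * Gd K φ x (q - x)) (Scl K ∩ Bq) :=
      (hfc.mono inter_subset_left).integrableOn_compact (hBco.inter_left (isClosed_Scl K))
    refine h1.of_forall_sdiff_eq_zero hcyl ?_
    intro x hx
    have hxB : x ∉ Bq := fun h => hx.2 ⟨cylFrom_subset_Scl K hx.1, h⟩
    have : w x ≤ 0 := by
      rw [hBq] at hxB
      have hxB : ¬ sqd q x ≤ ρ^2 + τ := hxB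
      rw [hwx]; linarith
    simp [hF'z _ this]
  have hnn : ∀ x ∈ cylFrom K, 0 ≤ 2 * deriv F (w x) * Gd K φ x (q - x) := by
    intro x hx
    rcases le_or_gt (w x) 0 with h | h
    · simp [hF'z _ h]
    · have := hpos x (cylFrom_subset_Scl K hx) (by rw [hwx] at h; linarith)
      have := hF'0 (w x)
      positivity
  have hp := (setIntegral_pos_iff_support_of_nonneg_ae
    ((ae_restrict_iff' hcyl).2 (Eventually.of_forall hnn)) hIntg).2 ?_
  · linarith
  · have hWo : IsOpen {x | sqd q x < ρ^2 + τ} :=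
      isOpen_lt (contDiff_sqd q (n := 1)).continuous continuous_const
    refine lt_of_lt_of_le ((hWo.inter (isOpen_cylFrom K)).measure_pos volume ?_) (measure_mono ?_)
    · have hbc : b ∈ closure (cylFrom K) := by rw [closure_cylFrom]; exact hbS
      refine mem_closure_iff.1 hbc _ hWo ?_
      change sqd q b < _
      rw [sqd_expand, q0, q1, q2]
      have : (b 0 - (1 + ρ) * b 0)^2 + (b 1 - (1 + ρ) * b 1)^2 + (b 2 - b 2)^2 = ρ^2 := by
        linear_combination ρ^2 * hb1
      linarith
    · intro x hx
      refine ⟨?_, hx.2⟩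
      have hx1 : sqd q x < ρ^2 + τ := hx.1
      have h1 := hpos x (cylFrom_subset_Scl K hx.2) hx1
      have h2 := hF'p (w x) (by rw [hwx]; linarith)
      have : 0 < 2 * deriv F (w x) * Gd K φ x (q - x) := by positivity
      exact this.ne'

theorem neumann {K : ℝ} {φ : (Fin 3 → ℝ) → ℝ} (hφ : ContDiffOn ℝ 1 φ (Scl K))
    (hw : ∀ ψ : (Fin 3 → ℝ) → ℝ, ContDiff ℝ 1 ψ → HasCompactSupport ψ →
        tsupport ψ ⊆ {x : Fin 3 → ℝ | K < x 2} →
        ∫ x in cylFrom K, ∑ i, grad3 φ x i * grad3 ψ x i = 0)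
    {b : Fin 3 → ℝ} (hb1 : (b 0)^2 + (b 1)^2 = 1) (hb2 : K < b 2) :
    Gd K φ b ![b 0, b 1, 0] = 0 := by
  refine le_antisymm (neumann_aux hφ hw hb1 hb2) ?_
  have h := neumann_aux (φ := fun x => - φ x) hφ.neg (by
    intro ψ h1 h2 h3
    have := hw ψ h1 h2 h3
    have e : ∀ x, ∑ i, grad3 (fun x => - φ x) x i * grad3 ψ x i =
        - ∑ i, grad3 φ x i * grad3 ψ x i := by
      intro x
      rw [← Finset.sum_neg_distrib]
      refine Finset.sum_congr rfl fun i _ => ?_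
      simp [grad3]
    simp_rw [e]
    rw [integral_neg, this, neg_zero]) hb1 hb2
  have e : Gd K (fun x => - φ x) b = - Gd K φ b := by
    unfold Gd; exact fderivWithin_fun_neg (uniqueDiffOn_Scl K b ⟨hb1.le, hb2.le⟩)
  rw [e] at h
  simpa using h

lemma hasFDerivWithinAt_Gd {K : ℝ} {φ : (Fin 3 → ℝ) → ℝ} (hφ : ContDiffOn ℝ 1 φ (Scl K))
    {x : Fin 3 → ℝ} (hx : x ∈ Scl K) : HasFDerivWithinAt φ (Gd K φ x) (Scl K) x :=
  (hφ.differentiableOn one_ne_zero x hx).hasFDerivWithinAt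

theorem neu_of_weak {K : ℝ} {φ : (Fin 3 → ℝ) → ℝ} (hφ : ContDiffOn ℝ 1 φ (Scl K))
    (hw : ∀ ψ : (Fin 3 → ℝ) → ℝ, ContDiff ℝ 1 ψ → HasCompactSupport ψ →
        tsupport ψ ⊆ {x : Fin 3 → ℝ | K < x 2} →
        ∫ x in cylFrom K, ∑ i, grad3 φ x i * grad3 ψ x i = 0)
    {b : Fin 3 → ℝ} (hb1 : (b 0)^2 + (b 1)^2 = 1) (hb2 : K < b 2) : Neu φ b := by
  have h1 : HasFDerivWithinAt φ (Gd K φ b) (Scl K) (sc 1 b) := by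
    rw [sc_one]; exact hasFDerivWithinAt_Gd hφ ⟨hb1.le, hb2.le⟩
  have hm : MapsTo (fun t => sc t b) (Icc 0 1) (Scl K) :=
    fun t ht => ⟨sc_sq_le ht hb1.le, hb2.le⟩
  have h2 := h1.comp_hasDerivWithinAt (1:ℝ) (hasDerivAt_sc 1 b).hasDerivWithinAt hm
  rw [neumann hφ hw hb1 hb2] at h2
  exact h2

theorem wh_of_weak {K : ℝ} {φ : (Fin 3 → ℝ) → ℝ} (hφ : ContDiffOn ℝ 1 φ (Scl K))
    (hw : ∀ ψ : (Fin 3 → ℝ) → ℝ, ContDiff ℝ 1 ψ → HasCompactSupport ψ →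
        tsupport ψ ⊆ {x : Fin 3 → ℝ | K < x 2} →
        ∫ x in cylFrom K, ∑ i, grad3 φ x i * grad3 ψ x i = 0) : WH (cylFrom K) φ := by
  refine ⟨hφ.mono (cylFrom_subset_Scl K), fun ψ h1 h2 h3 => ?_⟩
  rw [← hw ψ h1 h2 (h3.trans fun x hx => hx.2)]
  symm
  refine setIntegral_eq_integral_of_forall_compl_eq_zero fun x hx => ?_
  refine Finset.sum_eq_zero fun i _ => ?_
  rw [grad3_eq_zero_of_notMem_tsupport (fun h => hx (h3 h)), mul_zero]

theorem nice_of_weak {K : ℝ} {φ : (Fin 3 → ℝ) → ℝ} (hφ : ContDiffOn ℝ 1 φ (Scl K))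
    (hw : ∀ ψ : (Fin 3 → ℝ) → ℝ, ContDiff ℝ 1 ψ → HasCompactSupport ψ →
        tsupport ψ ⊆ {x : Fin 3 → ℝ | K < x 2} →
        ∫ x in cylFrom K, ∑ i, grad3 φ x i * grad3 ψ x i = 0) : Nice K φ :=
  ⟨hφ.continuousOn.mono (Cyl_subset_Scl K), wh_of_weak hφ hw,
    fun _ h1 h2 => neu_of_weak hφ hw h1 h2⟩

lemma Nice.diff {K : ℝ} {φ : (Fin 3 → ℝ) → ℝ} (hn : Nice K φ)
    (L L' : (Fin 3 → ℝ) →L[ℝ] (Fin 3 → ℝ)) (h1 : ∀ x, L' (L x) = x)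
    (h2 : ∀ x, L (L' x) = x)
    (hL : ∀ j k, ∑ i, L (Pi.single i 1) j * L (Pi.single i 1) k = if j = k then (1:ℝ) else 0)
    (b : Fin 3 → ℝ)
    (hr : ∀ x, ((L x + b) 0)^2 + ((L x + b) 1)^2 = (x 0)^2 + (x 1)^2)
    (hz : ∀ x, x 2 ≤ (L x + b) 2)
    (hsc : ∀ t x, L (sc t x) + b = sc t (L x + b)) (τ : ℝ) :
    Nice K (fun x => τ * (φ (L x + b) - φ x)) := by
  obtain ⟨hc, hw, hN⟩ := hn
  have hCyl : MapsTo (fun x => L x + b) (Cyl K) (Cyl K) := by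
    intro x hx
    refine ⟨?_, lt_of_lt_of_le hx.2 (hz x)⟩
    have := hr x
    simp only at this ⊢
    rw [this]; exact hx.1
  refine ⟨?_, ?_, ?_⟩
  · refine continuousOn_const.mul (ContinuousOn.sub ?_ hc)
    exact hc.comp (L.continuous.add continuous_const).continuousOn hCyl
  · refine WH.const_mul (isOpen_cylFrom K) (WH.sub (isOpen_cylFrom K) ?_ hw) τ
    refine hw.comp_affine (isOpen_cylFrom K) L L' h1 h2 1 hL b ?_
    intro x hx
    refine ⟨?_, lt_of_lt_of_le hx.2 (hz x)⟩
    rw [hr]; exact hx.1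
  · intro x hx1 hx2
    have n1 : HasDerivWithinAt (fun t => φ (sc t x)) 0 (Icc 0 1) 1 := hN x hx1 hx2
    have n2 : HasDerivWithinAt (fun t => φ (sc t (L x + b))) 0 (Icc 0 1) 1 :=
      hN (L x + b) (by rw [hr]; exact hx1) (lt_of_lt_of_le hx2 (hz x))
    have n3 := (n2.sub n1).const_mul τ
    simp only [sub_zero, mul_zero] at n3
    unfold Neu
    simp_rw [hsc]
    exact n3

/-- rotation about the axis -/
noncomputable def rotL (α : ℝ) : (Fin 3 → ℝ) →L[ℝ] (Fin 3 → ℝ) :=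
  ContinuousLinearMap.pi ![
    Real.cos α • (ContinuousLinearMap.proj 0 : (Fin 3 → ℝ) →L[ℝ] ℝ) - Real.sin α •
      (ContinuousLinearMap.proj 1 : (Fin 3 → ℝ) →L[ℝ] ℝ),
    Real.sin α • (ContinuousLinearMap.proj 0 : (Fin 3 → ℝ) →L[ℝ] ℝ) + Real.cos α •
      (ContinuousLinearMap.proj 1 : (Fin 3 → ℝ) →L[ℝ] ℝ),
    (ContinuousLinearMap.proj 2 : (Fin 3 → ℝ) →L[ℝ] ℝ)]

lemma rotL0 (α : ℝ) (x : Fin 3 → ℝ) : rotL α x 0 = Real.cos α * x 0 - Real.sin α * x 1 := by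
  simp [rotL]
lemma rotL1 (α : ℝ) (x : Fin 3 → ℝ) : rotL α x 1 = Real.sin α * x 0 + Real.cos α * x 1 := by
  simp [rotL]
lemma rotL2 (α : ℝ) (x : Fin 3 → ℝ) : rotL α x 2 = x 2 := by
  simp [rotL]

lemma rotL_inv (α : ℝ) (x : Fin 3 → ℝ) : rotL (-α) (rotL α x) = x := by
  have h := Real.sin_sq_add_cos_sq α
  funext i
  fin_cases i
  · simp only [Fin.zero_eta, rotL0, rotL1, Real.cos_neg, Real.sin_neg]
    linear_combination (x 0) * h
  · simp only [Fin.mk_one, rotL0, rotL1, Real.cos_neg, Real.sin_neg]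
    linear_combination (x 1) * h
  · simp [rotL2]

lemma rotL_orth (α : ℝ) (j k : Fin 3) :
    ∑ i, rotL α (Pi.single i 1) j * rotL α (Pi.single i 1) k = if j = k then (1:ℝ) else 0 := by
  have h := Real.sin_sq_add_cos_sq α
  rw [Fin.sum_univ_three]
  fin_cases j <;> fin_cases k <;> simp [rotL0, rotL1, rotL2] <;> linarith

/-- third basis vector -/
def e3 : Fin 3 → ℝ := ![0, 0, 1]

lemma nice_trans {K : ℝ} {φ : (Fin 3 → ℝ) → ℝ} (hn : Nice K φ) {δ : ℝ} (hδ : 0 < δ) :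
    Nice K (fun x => δ⁻¹ * (φ (x + δ • e3) - φ x)) := by
  have := hn.diff (ContinuousLinearMap.id ℝ _) (ContinuousLinearMap.id ℝ _) (fun x => rfl)
    (fun x => rfl) (by
      intro j k
      fin_cases j <;> fin_cases k <;> simp [Fin.sum_univ_three]) (δ • e3)
    (by intro x; simp [e3]) (by intro x; simp [e3, hδ.le])
    (by intro t x; funext i; fin_cases i <;> simp [e3, sc]) δ⁻¹
  simpa using this

lemma nice_rot {K : ℝ} {φ : (Fin 3 → ℝ) → ℝ} (hn : Nice K φ) (α : ℝ) :
    Nice K (fun x => α⁻¹ * (φ (rotL α x) - φ x)) := by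
  have h := Real.sin_sq_add_cos_sq α
  have := hn.diff (rotL α) (rotL (-α)) (rotL_inv α)
    (fun x => by have := rotL_inv (-α) x; rwa [neg_neg] at this) (rotL_orth α) 0
    (by
      intro x; simp only [add_zero, rotL0, rotL1]
      linear_combination ((x 0)^2 + (x 1)^2) * h)
    (by intro x; simp [rotL2])
    (by
      intro t x; rw [add_zero, add_zero]
      funext i; fin_cases i
      · simp [rotL0, sc]; ring
      · simp [rotL1, sc]; ring
      · simp [rotL2, sc]) α⁻¹
  simpa using this

lemma Gd_norm_le {K M : ℝ} (hM : 0 < M) {φ : (Fin 3 → ℝ) → ℝ} (hφ : ContDiffOn ℝ 1 φ (Scl K))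
    (hb : ∀ x ∈ cylFrom K, norm3 (grad3 φ x) ≤ M) : ∀ x ∈ Scl K, ‖Gd K φ x‖ ≤ 3 * M := by
  have h0 : ∀ x ∈ cylFrom K, ‖Gd K φ x‖ ≤ 3 * M := by
    intro x hx
    rw [Gd_eq hx]
    refine ContinuousLinearMap.opNorm_le_bound _ (by positivity) fun v => ?_
    rw [fderiv_apply_eq_sum]
    refine (norm_sum_le _ _).trans ?_
    have : ∀ j ∈ (Finset.univ : Finset (Fin 3)), ‖v j * grad3 φ x j‖ ≤ M * ‖v‖ := by
      intro j _
      rw [norm_mul, mul_comm]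
      refine mul_le_mul ?_ (norm_le_pi_norm v j) (norm_nonneg _) hM.le
      refine le_trans ?_ (hb x hx)
      rw [Real.norm_eq_abs]
      refine Real.abs_le_sqrt ?_
      exact Finset.single_le_sum (f := fun j => (grad3 φ x j)^2) (fun j _ => sq_nonneg _)
          (Finset.mem_univ j)
    refine (Finset.sum_le_sum this).trans (le_of_eq ?_)
    simp; ring
  intro x hx
  have hxc : x ∈ closure (cylFrom K) := by rw [closure_cylFrom]; exact hx
  have := mem_closure_iff_nhdsWithin_neBot.1 hxc
  have ht : Tendsto (fun y => ‖Gd K φ y‖) (𝓝[cylFrom K] x) (𝓝 ‖Gd K φ x‖) :=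
    ((continuousOn_Gd hφ x hx).mono (cylFrom_subset_Scl K)).norm
  refine le_of_tendsto ht ?_
  filter_upwards [self_mem_nhdsWithin] with y hy
  exact h0 y hy

lemma convex_Scl (K : ℝ) : Convex ℝ (Scl K) := by
  rw [← closure_cylFrom]; exact (convex_cylFrom K).closure

lemma phi_lip {K M : ℝ} (hM : 0 < M) {φ : (Fin 3 → ℝ) → ℝ} (hφ : ContDiffOn ℝ 1 φ (Scl K))
    (hb : ∀ x ∈ cylFrom K, norm3 (grad3 φ x) ≤ M) {x y : Fin 3 → ℝ} (hx : x ∈ Scl K)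
    (hy : y ∈ Scl K) : |φ y - φ x| ≤ 3 * M * ‖y - x‖ :=
  (convex_Scl K).norm_image_sub_le_of_norm_hasFDerivWithin_le
    (fun _ hz => hasFDerivWithinAt_Gd hφ hz) (Gd_norm_le hM hφ hb) hx hy

/-- derivative of φ along a curve inside the closed cylinder, as a limit of difference quotients -/
lemma tendsto_quot {K : ℝ} {φ : (Fin 3 → ℝ) → ℝ} (hφ : ContDiffOn ℝ 1 φ (Scl K))
    {γ : ℝ → Fin 3 → ℝ} {v x : Fin 3 → ℝ} (hγ : HasDerivAt γ v 0) (h0 : γ 0 = x)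
    (hm : ∀ t, 0 ≤ t → γ t ∈ Scl K) :
    Tendsto (fun t => t⁻¹ * (φ (γ t) - φ x)) (𝓝[>] 0) (𝓝 (Gd K φ x v)) := by
  have hx : γ 0 ∈ Scl K := hm 0 le_rfl
  have h1 := (hasFDerivWithinAt_Gd hφ hx).comp_hasDerivWithinAt (0:ℝ)
    (hγ.hasDerivWithinAt (s := Ioi 0)) (fun t ht => hm t (le_of_lt ht))
  have h2 := (hasDerivWithinAt_iff_tendsto_slope' (by simp)).1 h1
  rw [h0] at h2
  refine h2.congr fun t => ?_
  rw [slope_def_field, Function.comp, Function.comp, h0, sub_zero, div_eq_inv_mul]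

section decay
variable {K M : ℝ} {φ : (Fin 3 → ℝ) → ℝ}

theorem decay_z (hM : 0 < M) (hφ : ContDiffOn ℝ 1 φ (Scl K)) (hn : Nice K φ)
    (hb : ∀ x ∈ cylFrom K, norm3 (grad3 φ x) ≤ M) {x y : Fin 3 → ℝ} (hx : x ∈ Cyl K)
    (hy : y ∈ Cyl K) (hxy : x 2 = y 2) :
    |Gd K φ x e3 - Gd K φ y e3| ≤ C0 * (6 * M) * Real.exp (-d0 * (x 2 - K)) := by
  have hmS : ∀ x ∈ Cyl K, ∀ t : ℝ, 0 ≤ t → x + t • e3 ∈ Scl K := by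
    intro x hx t ht
    refine ⟨by simpa [e3] using hx.1, ?_⟩
    have := hx.2
    simp [e3]; linarith
  have hder : ∀ x : Fin 3 → ℝ, HasDerivAt (fun t : ℝ => x + t • e3) e3 0 := by
    intro x
    simpa using ((hasDerivAt_id (0:ℝ)).smul_const e3).const_add x
  have t1 := tendsto_quot (x := x) hφ (hder x) (by simp) (hmS x hx)
  have t2 := tendsto_quot (x := y) hφ (hder y) (by simp) (hmS y hy)
  refine le_of_tendsto (t1.sub t2).abs ?_
  filter_upwards [self_mem_nhdsWithin] with δ hδ
  have hδ : 0 < δ := hδ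
  refine osc_decay (nice_trans hn hδ) (by positivity) ?_ hx hy hx.2 le_rfl hxy.le
  intro x hx
  have h1 := phi_lip hM hφ hb (Cyl_subset_Scl K hx) (hmS x hx δ hδ.le)
  have h2 : ‖x + δ • e3 - x‖ ≤ δ := by
    rw [add_sub_cancel_left, pi_norm_le_iff_of_nonneg hδ.le]
    intro i; fin_cases i <;> simp [e3, hδ.le, abs_of_pos hδ]
  rw [abs_mul, abs_of_pos (inv_pos.2 hδ), inv_mul_le_iff₀ hδ]
  nlinarith

theorem decay_rot (hM : 0 < M) (hφ : ContDiffOn ℝ 1 φ (Scl K)) (hn : Nice K φ)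
    (hb : ∀ x ∈ cylFrom K, norm3 (grad3 φ x) ≤ M) {x : Fin 3 → ℝ} (hx : x ∈ Cyl K) :
    |Gd K φ x ![- x 1, x 0, 0]| ≤ C0 * (6 * M) * Real.exp (-d0 * (x 2 - K)) := by
  have hmS : ∀ x ∈ Cyl K, ∀ t : ℝ, rotL t x ∈ Scl K := by
    intro x hx t
    refine ⟨?_, by rw [rotL2]; exact hx.2.le⟩
    have h := Real.sin_sq_add_cos_sq t
    rw [rotL0, rotL1]
    refine le_trans (le_of_eq ?_) hx.1
    linear_combination ((x 0)^2 + (x 1)^2) * h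
  have hder : HasDerivAt (fun t : ℝ => rotL t x) ![- x 1, x 0, 0] 0 := by
    rw [hasDerivAt_pi]
    intro i
    fin_cases i
    · simp only [Fin.zero_eta, rotL0]
      simpa using ((Real.hasDerivAt_cos 0).mul_const (x 0)).fun_sub
        ((Real.hasDerivAt_sin 0).mul_const (x 1))
    · simp only [Fin.mk_one, rotL1]
      simpa using ((Real.hasDerivAt_sin 0).mul_const (x 0)).fun_add
        ((Real.hasDerivAt_cos 0).mul_const (x 1))
    · simpa [rotL2] using hasDerivAt_const (0:ℝ) (x 2)
  have t1 := tendsto_quot (x := x) hφ hder (by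
    funext i; fin_cases i <;> simp [rotL0, rotL1, rotL2]) (fun t _ => hmS x hx t)
  refine le_of_tendsto t1.abs ?_
  have : Ioo (0:ℝ) 1 ∈ 𝓝[>] (0:ℝ) := Ioo_mem_nhdsGT (by norm_num)
  filter_upwards [this] with α hα
  have hα0 := hα.1
  have hy : (![0, 0, x 2] : Fin 3 → ℝ) ∈ Cyl K := ⟨by simp, hx.2⟩
  have hd := osc_decay (B := 6 * M) (nice_rot hn α) (by positivity) (by
    intro x hx
    have h1 := phi_lip hM hφ hb (Cyl_subset_Scl K hx) (hmS x hx α)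
    have h2 : ‖rotL α x - x‖ ≤ 2 * α := by
      have c1 := Real.one_sub_sq_div_two_le_cos (x := α)
      have c2 := Real.cos_le_one α
      have s1 : Real.sin α ≤ α := Real.sin_le hα0.le
      have s2 : 0 ≤ Real.sin α := Real.sin_nonneg_of_nonneg_of_le_pi hα0.le
        (by linarith [Real.pi_gt_three, hα.2])
      have hα2 : α^2 ≤ α := by nlinarith [hα.2]
      have a0 : |x 0| ≤ 1 := abs_le_of_sq_le_sq (by nlinarith [hx.1, sq_nonneg (x 1)]) (by norm_num)
      have a1 : |x 1| ≤ 1 := abs_le_of_sq_le_sq (by nlinarith [hx.1, sq_nonneg (x 0)]) (by norm_num)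
      have k1 : |Real.cos α - 1| ≤ α := by rw [abs_le]; constructor <;> linarith
      have k2 : |Real.sin α| ≤ α := by rw [abs_le]; constructor <;> linarith
      rw [pi_norm_le_iff_of_nonneg (by positivity)]
      intro i; fin_cases i
      · simp only [Fin.zero_eta, Pi.sub_apply, rotL0, Real.norm_eq_abs]
        have e : Real.cos α * x 0 - Real.sin α * x 1 - x 0 =
          (Real.cos α - 1) * x 0 - Real.sin α * x 1 := by ring
        rw [e]
        refine (abs_sub _ _).trans ?_
        rw [abs_mul, abs_mul]
        nlinarith [abs_nonneg (x 0), abs_nonneg (x 1), abs_nonneg (Real.sin α),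
          abs_nonneg (Real.cos α - 1)]
      · simp only [Fin.mk_one, Pi.sub_apply, rotL1, Real.norm_eq_abs]
        have e : Real.sin α * x 0 + Real.cos α * x 1 - x 1 =
          (Real.cos α - 1) * x 1 + Real.sin α * x 0 := by ring
        rw [e]
        refine (abs_add_le _ _).trans ?_
        rw [abs_mul, abs_mul]
        nlinarith [abs_nonneg (x 0), abs_nonneg (x 1), abs_nonneg (Real.sin α),
          abs_nonneg (Real.cos α - 1)]
      · simp [rotL2, hα0.le]
    rw [abs_mul, abs_of_pos (inv_pos.2 hα0), inv_mul_le_iff₀ hα0]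
    nlinarith) hx hy hx.2 le_rfl (by simp)
  have e : rotL α ![0, 0, x 2] = ![0, 0, x 2] := by
    funext i; fin_cases i <;> simp [rotL0, rotL1, rotL2]
  simpa [e] using hd
end decay

lemma lap3_cosh (z : ℝ) (x : Fin 3 → ℝ) :
    lap3 (fun y => (2 - ((y 0)^2 + (y 1)^2)) * Real.cosh (y 2 - z)) x =
      - (2 + ((x 0)^2 + (x 1)^2)) * Real.cosh (x 2 - z) := by
  have df : ∀ x : Fin 3 → ℝ, DifferentiableAt ℝ (fun y : Fin 3 → ℝ => 2 - ((y 0)^2 + (y 1)^2)) x := by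
    intro x; fun_prop
  have dl : ∀ x : Fin 3 → ℝ, DifferentiableAt ℝ (fun y : Fin 3 → ℝ => y 2 - z) x := by
    intro x; fun_prop
  have dg : ∀ x : Fin 3 → ℝ, DifferentiableAt ℝ (fun y : Fin 3 → ℝ => Real.cosh (y 2 - z)) x := by
    intro x; exact (Real.hasDerivAt_cosh _).differentiableAt.comp x (dl x)
  have dh : ∀ x : Fin 3 → ℝ, DifferentiableAt ℝ (fun y : Fin 3 → ℝ => Real.sinh (y 2 - z)) x := by
    intro x; exact (Real.hasDerivAt_sinh _).differentiableAt.comp x (dl x)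
  have gl : ∀ (x : Fin 3 → ℝ) i, grad3 (fun y : Fin 3 → ℝ => y 2 - z) x i = if i = 2 then 1 else 0 := by
    intro x i
    rw [grad3_sub (by fun_prop) (by fun_prop), grad3_coord, grad3_const, sub_zero]
  have gg : ∀ (x : Fin 3 → ℝ) i, grad3 (fun y : Fin 3 → ℝ => Real.cosh (y 2 - z)) x i =
      Real.sinh (x 2 - z) * if i = 2 then 1 else 0 := by
    intro x i
    rw [grad3_comp (g := Real.cosh) (Real.hasDerivAt_cosh _) (dl x), gl]
  have gh : ∀ (x : Fin 3 → ℝ) i, grad3 (fun y : Fin 3 → ℝ => Real.sinh (y 2 - z)) x i =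
      Real.cosh (x 2 - z) * if i = 2 then 1 else 0 := by
    intro x i
    rw [grad3_comp (g := Real.sinh) (Real.hasDerivAt_sinh _) (dl x), gl]
  have gsq : ∀ (x : Fin 3 → ℝ) j i, grad3 (fun y : Fin 3 → ℝ => (y j)^2) x i =
      2 * x j * if i = j then 1 else 0 := by
    intro x j i
    have := grad3_comp (g := fun t : ℝ => t^2) (f := fun y : Fin 3 → ℝ => y j) (x := x)
      (hasDerivAt_pow 2 _) (by fun_prop) i
    rw [this, grad3_coord]; simp
  have gf : ∀ (x : Fin 3 → ℝ) i, grad3 (fun y : Fin 3 → ℝ => 2 - ((y 0)^2 + (y 1)^2)) x i =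
      - (2 * x 0 * (if i = 0 then 1 else 0) + 2 * x 1 * if i = 1 then 1 else 0) := by
    intro x i
    rw [grad3_sub (by fun_prop) (by fun_prop), grad3_const, grad3_add (by fun_prop) (by fun_prop),
      gsq, gsq]
    ring
  unfold lap3
  rw [Fin.sum_univ_three]
  simp_rw [grad3_mul (df _) (dg _), gf, gg]
  simp only [Fin.isValue, Fin.reduceEq, if_false, if_true, mul_zero, mul_one, zero_add, add_zero,
    neg_zero]
  rw [grad3_mul (df x) (dh x), gf, gh]
  have d0 : DifferentiableAt ℝ (fun y : Fin 3 → ℝ => -(2 * y 0)) x := by fun_prop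
  have d1 : DifferentiableAt ℝ (fun y : Fin 3 → ℝ => -(2 * y 1)) x := by fun_prop
  rw [grad3_mul (dg x) d0, grad3_mul (dg x) d1, gg, gg]
  have e : ∀ j, grad3 (fun y : Fin 3 → ℝ => -(2 * y j)) x j = -2 := by
    intro j
    have : (fun y : Fin 3 → ℝ => -(2 * y j)) = fun y => (-2) * y j := by funext y; ring
    rw [this, grad3_const_mul (by fun_prop), grad3_coord]; simp
  rw [e, e]
  simp
  ring

lemma quot_close {K : ℝ} {φ : (Fin 3 → ℝ) → ℝ} (hφ : ContDiffOn ℝ 1 φ (Scl K)) {a b : ℝ}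
    (hab : K ≤ a) {p : Fin 3 → ℝ} (hp : p ∈ Dbar a b) {η : ℝ} (hη : 0 < η) :
    ∃ l : ℝ, 0 < l ∧ l < 1 ∧ ∀ x ∈ Dbar a b,
      |(1 - l)⁻¹ * (φ x - φ (l • x + (1 - l) • p)) - Gd K φ x (x - p)| ≤ η := by
  have hsub : Dbar a b ⊆ Scl K := fun x hx => ⟨hx.1, hab.trans hx.2.1⟩
  have hconv : Convex ℝ (Dbar a b) := by
    have : Dbar a b = Scl a ∩ {x | x 2 ≤ b} := by
      ext x; simp only [Dbar, Scl, mem_inter_iff, mem_ofPred_eq]; tauto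
    rw [this]
    refine (convex_Scl a).inter ?_
    exact convex_halfSpace_le (f := fun x : Fin 3 → ℝ => x 2) ⟨fun _ _ => rfl, fun _ _ => rfl⟩ b
  obtain ⟨R, hR0, hR⟩ : ∃ R : ℝ, 0 < R ∧ ∀ x ∈ Dbar a b, ‖x - p‖ ≤ R := by
    obtain ⟨R, hR⟩ := (isCompact_Dbar a b).isBounded.exists_norm_le
    refine ⟨R + R + 1, ?_, fun x hx => ?_⟩
    · have := (norm_nonneg _).trans (hR p hp); linarith
    · have := norm_sub_le x p
      linarith [hR x hx, hR p hp]
  have huc := (isCompact_Dbar a b).uniformContinuousOn_of_continuous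
    ((continuousOn_Gd hφ).mono hsub)
  rw [Metric.uniformContinuousOn_iff] at huc
  obtain ⟨δ, hδ, huc⟩ := huc (η / R) (by positivity)
  obtain ⟨κ, hκ⟩ : ∃ κ : ℝ, κ = min (1/2) (δ / (2 * R)) := ⟨_, rfl⟩
  have hκ0 : 0 < κ := by rw [hκ]; positivity
  have hκ1 : κ ≤ 1/2 := by rw [hκ]; exact min_le_left _ _
  have hκ2 : κ * R < δ := by
    have : κ ≤ δ / (2 * R) := by rw [hκ]; exact min_le_right _ _
    have h2 : κ * R ≤ δ / (2 * R) * R := by gcongr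
    have h3 : δ / (2 * R) * R = δ / 2 := by field_simp
    linarith
  refine ⟨1 - κ, by linarith, by linarith, fun x hx => ?_⟩
  obtain ⟨y, hy⟩ : ∃ y, y = (1 - κ) • x + (1 - (1 - κ)) • p := ⟨_, rfl⟩
  rw [← hy]
  have hyD : y ∈ Dbar a b := by
    rw [hy]; exact hconv hx hp (by linarith) (by linarith) (by ring)
  have hxy : x - y = κ • (x - p) := by
    rw [hy]; funext i; simp; ring
  have hseg : segment ℝ y x ⊆ Dbar a b := hconv.segment_subset hyD hx
  have hmv := (convex_segment y x).norm_image_sub_le_of_norm_hasFDerivWithin_le'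
    (f := φ) (f' := Gd K φ) (φ := Gd K φ x) (C := η / R)
    (fun ξ hξ => (hasFDerivWithinAt_Gd hφ (hsub (hseg hξ))).mono (hseg.trans hsub))
    (by
      intro ξ hξ
      rw [← dist_eq_norm]
      refine (huc ξ (hseg hξ) x hx ?_).le
      rw [dist_eq_norm]
      have h1 : ‖ξ - x‖ ≤ ‖y - x‖ := by
        have := norm_sub_le_of_mem_segment (segment_symm ℝ y x ▸ hξ)
        exact this
      have h2 : ‖y - x‖ = κ * ‖x - p‖ := by
        rw [norm_sub_rev, hxy, norm_smul, Real.norm_eq_abs, abs_of_pos hκ0]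
      have := hR x hx
      nlinarith)
    (left_mem_segment ℝ y x) (right_mem_segment ℝ y x)
  rw [hxy, map_smul, smul_eq_mul, norm_smul, Real.norm_eq_abs, Real.norm_eq_abs, abs_of_pos hκ0] at hmv
  have e : (1 - (1 - κ))⁻¹ * (φ x - φ y) - Gd K φ x (x - p) =
      κ⁻¹ * (φ x - φ y - κ * Gd K φ x (x - p)) := by
    rw [sub_sub_cancel]; field_simp
  rw [e, abs_mul, abs_of_pos (inv_pos.2 hκ0), inv_mul_le_iff₀ hκ0]
  refine hmv.trans ?_
  have := hR x hx
  calc η / R * (κ * ‖x - p‖) ≤ η / R * (κ * R) := by gcongr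
    _ = κ * η := by field_simp

theorem dil_lower {K M q E z L : ℝ} (hM : 0 < M) {φ : (Fin 3 → ℝ) → ℝ}
    (hφ : ContDiffOn ℝ 1 φ (Scl K)) (hW : WH (cylFrom K) φ)
    (hG : ∀ x ∈ Scl K, ‖Gd K φ x‖ ≤ 3 * M) (hL : 0 < L) (hK : K < z - L)
    {p : Fin 3 → ℝ} (hp2 : p 2 = z) (hp : (p 0)^2 + (p 1)^2 < 1) (hE : 0 ≤ E)
    (hlat : ∀ b, (b 0)^2 + (b 1)^2 = 1 → z - L < b 2 → b 2 < z + L →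
      q * (b 2 - z) - E ≤ Gd K φ b (b - p)) :
    ∀ x, (x 0)^2 + (x 1)^2 ≤ 1 → x 2 = z →
      - E - 2 * (3 * M * (2 + L) + |q| * L) / Real.cosh L ≤ Gd K φ x (x - p) := by
  intro x0 hx0 hx0z
  obtain ⟨N, hN⟩ : ∃ N : ℝ, N = 3 * M * (2 + L) + |q| * L := ⟨_, rfl⟩
  have hN0 : 0 < N := by rw [hN]; positivity
  rw [← hN]
  refine le_of_forall_pos_le_add fun η2 hη2 => ?_
  obtain ⟨η, hη, hηd⟩ : ∃ η : ℝ, 0 < η ∧ 2 * η = η2 := ⟨η2 / 2, by positivity, by ring⟩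
  have hsub : Dbar (z - L) (z + L) ⊆ Scl K := fun x hx => ⟨hx.1, by linarith [hx.2.1]⟩
  have hpD : p ∈ Dbar (z - L) (z + L) := ⟨hp.le, by linarith, by linarith⟩
  obtain ⟨l, hl0, hl1, hl⟩ := quot_close hφ (a := z - L) (b := z + L) hK.le hpD hη
  obtain ⟨u, hu⟩ : ∃ u : (Fin 3 → ℝ) → ℝ, u = fun x =>
    (1 - l)⁻¹ * (φ x - φ (l • x + (1 - l) • p)) := ⟨_, rfl⟩
  have hux : ∀ x, u x = (1 - l)⁻¹ * (φ x - φ (l • x + (1 - l) • p)) := fun x => by rw [hu]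
  have hDo := isOpen_Dint (z - L) (z + L)
  have hDsub : Dint (z - L) (z + L) ⊆ cylFrom K := fun x hx => ⟨hx.1, by linarith [hx.2.1]⟩
  have hpc : p ∈ cylFrom K := ⟨hp, by linarith⟩
  have huW : WH (Dint (z - L) (z + L)) u := by
    rw [hu]
    refine WH.const_mul hDo (WH.sub hDo (hW.mono hDsub) ?_) _
    have := hW.comp_affine (V := Dint (z - L) (z + L)) (isOpen_cylFrom K)
      (l • ContinuousLinearMap.id ℝ _) (l⁻¹ • ContinuousLinearMap.id ℝ _)
      (by intro x; simp [smul_smul, hl0.ne']) (by intro x; simp [smul_smul, hl0.ne']) (l^2)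
      (by
        intro j k
        fin_cases j <;> fin_cases k <;> simp [Fin.sum_univ_three, sq]) ((1 - l) • p)
      (by
        intro x hx
        exact convex_cylFrom K (hDsub hx) hpc hl0.le (by linarith) (by ring))
    simpa using this
  have huC : ContinuousOn u (Dbar (z - L) (z + L)) := by
    rw [hu]
    have k1 := hφ.continuousOn
    refine continuousOn_const.mul ((k1.mono hsub).sub ?_)
    refine k1.comp (Continuous.continuousOn (by fun_prop)) ?_
    intro x hx
    exact convex_Scl K (hsub hx) (cylFrom_subset_Scl K hpc) hl0.le (by linarith) (by ring)
  have hch := Real.cosh_pos L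
  obtain ⟨s, hs⟩ : ∃ s : (Fin 3 → ℝ) → ℝ, s = fun x => (q * dt p e3 x -
    (N / Real.cosh L) * ((2 - ((x 0)^2 + (x 1)^2)) * Real.cosh (x 2 - z))) - (E + η) := ⟨_, rfl⟩
  have hdt : ∀ x, dt p e3 x = x 2 - z := by
    intro x; simp [dt, Fin.sum_univ_three, e3, hp2]
  have hsx : ∀ x, s x = q * (x 2 - z) - N / Real.cosh L * ((2 - ((x 0)^2 + (x 1)^2)) *
      Real.cosh (x 2 - z)) - (E + η) := by intro x; rw [hs]; simp only [hdt]
  have c1 : ContDiff ℝ 2 (fun x => q * dt p e3 x) := contDiff_const.mul (contDiff_dt _ _)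
  have c2 : ContDiff ℝ 2 (fun x : Fin 3 → ℝ => (2 - ((x 0)^2 + (x 1)^2)) * Real.cosh (x 2 - z)) := by
    fun_prop
  have c2' : ContDiff ℝ 2 (fun x : Fin 3 → ℝ => (N / Real.cosh L) *
    ((2 - ((x 0)^2 + (x 1)^2)) * Real.cosh (x 2 - z))) := contDiff_const.mul c2
  have hsc : ContDiff ℝ 2 s := by rw [hs]; exact (c1.sub c2').sub contDiff_const
  have hlap : ∀ x, 0 < lap3 s x := by
    intro x
    rw [hs, lap3_sub (c1.sub c2') contDiff_const, lap3_sub c1 c2', lap3_const_mul (contDiff_dt _ _),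
      lap3_const_mul c2, lap3_dt, lap3_cosh]
    have : lap3 (fun _ => E + η) x = 0 := by simp [lap3, grad3_const]
    rw [this]
    have h1 := Real.cosh_pos (x 2 - z)
    have : 0 < N / Real.cosh L * ((2 + ((x 0)^2 + (x 1)^2)) * Real.cosh (x 2 - z)) := by positivity
    linarith
  have hcmp := MPcyl huC huW hsc (fun x _ _ => hlap x)
    (by
      intro b hb h1 h2
      left
      have e1 := hlat b hb h1 h2
      have e2 := abs_le.1 (hl b ⟨hb.le, h1.le, h2.le⟩)
      rw [← hux] at e2
      rw [hsx, hb]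
      have h3 := Real.cosh_pos (b 2 - z)
      have : 0 < N / Real.cosh L * ((2 - 1) * Real.cosh (b 2 - z)) := by
        have : (0:ℝ) < 2 - 1 := by norm_num
        positivity
      linarith [e2.1])
    (by
      intro x hx hor
      have habs : |x 2 - z| = L := by
        rcases hor with h | h <;> rw [h]
        · rw [show z - L - z = -L by ring, abs_neg, abs_of_pos hL]
        · rw [show z + L - z = L by ring, abs_of_pos hL]
      have hcosh : Real.cosh (x 2 - z) = Real.cosh L := by rw [← Real.cosh_abs, habs]
      have e2 := abs_le.1 (hl x hx)
      rw [← hux] at e2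
      have hxp : ‖x - p‖ ≤ 2 + L := by
        rw [pi_norm_le_iff_of_nonneg (by positivity)]
        have ax : ∀ y : Fin 3 → ℝ, (y 0)^2 + (y 1)^2 ≤ 1 → |y 0| ≤ 1 ∧ |y 1| ≤ 1 := by
          intro y hy
          constructor
          · exact abs_le_of_sq_le_sq (by nlinarith [sq_nonneg (y 1)]) (by norm_num)
          · exact abs_le_of_sq_le_sq (by nlinarith [sq_nonneg (y 0)]) (by norm_num)
        have a1 := ax x hx.1
        have a2 := ax p hp.le
        intro i; fin_cases i
        · have := abs_sub (x 0) (p 0)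
          simp only [Fin.zero_eta, Pi.sub_apply, Real.norm_eq_abs]; linarith [a1.1, a2.1]
        · have := abs_sub (x 1) (p 1)
          simp only [Fin.mk_one, Pi.sub_apply, Real.norm_eq_abs]; linarith [a1.2, a2.2]
        · simp only [Fin.reduceFinMk, Pi.sub_apply, Real.norm_eq_abs, hp2, habs]; linarith
      have hgx : |Gd K φ x (x - p)| ≤ 3 * M * (2 + L) := by
        refine ((Gd K φ x).le_opNorm _).trans ?_
        have := hG x (hsub hx)
        gcongr
      have hq : q * (x 2 - z) ≤ |q| * L := by
        rw [← habs, ← abs_mul]; exact le_abs_self _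
      rw [hsx, hcosh]
      have e5 : N / Real.cosh L * ((2 - ((x 0)^2 + (x 1)^2)) * Real.cosh L) =
        N * (2 - ((x 0)^2 + (x 1)^2)) := by field_simp
      rw [e5]
      have e6 : N * 1 ≤ N * (2 - ((x 0)^2 + (x 1)^2)) := by
        gcongr; linarith [hx.1]
      linarith [e2.1, (abs_le.1 hgx).1])
  have hx0D : x0 ∈ Dbar (z - L) (z + L) := ⟨hx0, by linarith, by linarith⟩
  have f1 := hcmp x0 hx0D
  have f2 := abs_le.1 (hl x0 hx0D)
  rw [← hux] at f2
  rw [hsx, hx0z, sub_self, Real.cosh_zero, mul_zero, mul_one] at f1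
  have f3 : N / Real.cosh L * (2 - ((x0 0)^2 + (x0 1)^2)) ≤ N / Real.cosh L * 2 := by
    gcongr; nlinarith [sq_nonneg (x0 0), sq_nonneg (x0 1)]
  have f4 : 2 * N / Real.cosh L = N / Real.cosh L * 2 := by ring
  rw [f4]
  linarith [f2.2]

lemma isOpen_diskSet : IsOpen diskSet := by
  unfold diskSet
  refine isOpen_lt ?_ ?_ <;> fun_prop

lemma volume_diskSet : (volume : Measure (Fin 2 → ℝ)) diskSet = ENNReal.ofReal π := by
  have h := EuclideanSpace.volume_ball_fin_two (0 : EuclideanSpace ℝ (Fin 2)) 1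
  rw [← (PiLp.volume_preserving_toLp (Fin 2)).measure_preimage
    Metric.isOpen_ball.measurableSet.nullMeasurableSet] at h
  have e : (WithLp.toLp 2) ⁻¹' (Metric.ball (0 : EuclideanSpace ℝ (Fin 2)) 1) = diskSet := by
    ext x
    simp only [mem_preimage, mem_ball_zero_iff, EuclideanSpace.norm_eq, diskSet, Fin.sum_univ_two,
      Real.norm_eq_abs, sq_abs]
    rw [Real.sqrt_lt' one_pos, one_pow]
    rfl
  rw [e] at h
  rw [h]; simp

lemma snoc_eq (x' : Fin 2 → ℝ) (t : ℝ) :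
    (Fin.snoc x' t : Fin 3 → ℝ) = ![x' 0, x' 1, t] := by
  funext i; fin_cases i <;> rfl

lemma single_two : (Pi.single 2 1 : Fin 3 → ℝ) = e3 := by
  funext i; fin_cases i <;> simp [e3, Pi.single_apply]

theorem flux_bound {K M m₀ : ℝ} {φ : (Fin 3 → ℝ) → ℝ} (hM : 0 < M)
    (hφ : ContDiffOn ℝ 1 φ (Scl K)) (hn : Nice K φ)
    (hb : ∀ x ∈ cylFrom K, norm3 (grad3 φ x) ≤ M)
    (hflux : ∀ t : ℝ, K < t → ∫ x' in diskSet, grad3 φ (Fin.snoc x' t) 2 = m₀)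
    {x : Fin 3 → ℝ} (hx : x ∈ Cyl K) :
    |Gd K φ x e3 - m₀ / π| ≤ C0 * (6 * M) * Real.exp (-d0 * (x 2 - K)) := by
  obtain ⟨ε, hε⟩ : ∃ ε, ε = C0 * (6 * M) * Real.exp (-d0 * (x 2 - K)) := ⟨_, rfl⟩
  rw [← hε]
  have hmem : ∀ x' ∈ diskSet, (![x' 0, x' 1, x 2] : Fin 3 → ℝ) ∈ cylFrom K :=
    fun x' hx' => ⟨hx', hx.2⟩
  have h1 : ∫ x' in diskSet, Gd K φ ![x' 0, x' 1, x 2] e3 = m₀ := by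
    rw [← hflux (x 2) hx.2]
    refine setIntegral_congr_fun isOpen_diskSet.measurableSet fun x' hx' => ?_
    rw [snoc_eq, Gd_eq (hmem x' hx'), ← single_two]
    rfl
  have hfin : (volume : Measure (Fin 2 → ℝ)) diskSet < ⊤ := by
    rw [volume_diskSet]; exact ENNReal.ofReal_lt_top
  have hcont : ContinuousOn (fun x' : Fin 2 → ℝ => Gd K φ ![x' 0, x' 1, x 2] e3) diskSet := by
    refine ContinuousOn.clm_apply ?_ continuousOn_const
    refine (continuousOn_Gd hφ).comp (Continuous.continuousOn ?_)
      (fun x' hx' => cylFrom_subset_Scl K (hmem x' hx'))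
    refine continuous_pi fun i => ?_
    fin_cases i <;> simp <;> fun_prop
  have hIntg : IntegrableOn (fun x' : Fin 2 → ℝ => Gd K φ ![x' 0, x' 1, x 2] e3) diskSet := by
    refine IntegrableOn.of_bound hfin (hcont.aestronglyMeasurable isOpen_diskSet.measurableSet)
      (3 * M * ‖e3‖) ?_
    refine (ae_restrict_iff' isOpen_diskSet.measurableSet).2 (Eventually.of_forall fun x' hx' => ?_)
    refine ((Gd K φ _).le_opNorm _).trans ?_
    have := Gd_norm_le hM hφ hb _ (cylFrom_subset_Scl K (hmem x' hx'))
    gcongr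
  have hreal : (volume : Measure (Fin 2 → ℝ)).real diskSet = π := by
    rw [Measure.real, volume_diskSet, ENNReal.toReal_ofReal Real.pi_pos.le]
  have h2 : ∫ x' in diskSet, (Gd K φ ![x' 0, x' 1, x 2] e3 - Gd K φ x e3) =
      m₀ - π * Gd K φ x e3 := by
    rw [integral_sub hIntg (integrableOn_const hfin.ne), h1, setIntegral_const, hreal, smul_eq_mul]
  have h3 := norm_setIntegral_le_of_norm_le_const (μ := volume) (s := diskSet) (C := ε)
    (f := fun x' : Fin 2 → ℝ => Gd K φ ![x' 0, x' 1, x 2] e3 - Gd K φ x e3) hfin (by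
      intro x' hx'
      rw [Real.norm_eq_abs, abs_sub_comm, hε]
      exact decay_z hM hφ hn hb hx (cylFrom_subset_Cyl K (hmem x' hx')) (by simp))
  rw [h2, hreal, Real.norm_eq_abs] at h3
  have hpi := Real.pi_pos
  have e : Gd K φ x e3 - m₀ / π = - ((m₀ - π * Gd K φ x e3) / π) := by field_simp; ring
  rw [e, abs_neg, abs_div, abs_of_pos hpi, div_le_iff₀ hpi]
  exact h3

lemma norm3_le (v : Fin 3 → ℝ) : norm3 v ≤ |v 0| + |v 1| + |v 2| := by
  unfold norm3
  rw [Fin.sum_univ_three, Real.sqrt_le_left (by positivity)]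
  nlinarith [sq_abs (v 0), sq_abs (v 1), sq_abs (v 2), abs_nonneg (v 0), abs_nonneg (v 1),
    abs_nonneg (v 2), mul_nonneg (abs_nonneg (v 0)) (abs_nonneg (v 1)),
    mul_nonneg (abs_nonneg (v 0)) (abs_nonneg (v 2)),
    mul_nonneg (abs_nonneg (v 1)) (abs_nonneg (v 2))]

theorem horiz_bound {K M m₀ : ℝ} {φ : (Fin 3 → ℝ) → ℝ} (hM : 0 < M)
    (hφ : ContDiffOn ℝ 1 φ (Scl K))
    (hw : ∀ ψ : (Fin 3 → ℝ) → ℝ, ContDiff ℝ 1 ψ → HasCompactSupport ψ →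
        tsupport ψ ⊆ {x : Fin 3 → ℝ | K < x 2} →
        ∫ x in cylFrom K, ∑ i, grad3 φ x i * grad3 ψ x i = 0)
    (hb : ∀ x ∈ cylFrom K, norm3 (grad3 φ x) ≤ M)
    (hflux : ∀ t : ℝ, K < t → ∫ x' in diskSet, grad3 φ (Fin.snoc x' t) 2 = m₀)
    {x : Fin 3 → ℝ} (hx : x ∈ cylFrom K) {L : ℝ} (hL0 : 0 < L) (hL : x 2 - K = 2 * L)
    {p : Fin 3 → ℝ} (hp2 : p 2 = x 2) (hp : (p 0)^2 + (p 1)^2 < 1) :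
    |Gd K φ x (x - p)| ≤ (1 + L) * (C0 * (6 * M) * Real.exp (-d0 * L)) +
      2 * (3 * M * (2 + L) + |m₀ / π| * L) / Real.cosh L := by
  have hn := nice_of_weak hφ hw
  obtain ⟨ε, hε⟩ : ∃ ε, ε = C0 * (6 * M) * Real.exp (-d0 * L) := ⟨_, rfl⟩
  have hε0 : 0 < ε := by rw [hε]; have := C0_pos; positivity
  rw [← hε]
  have hG := Gd_norm_le hM hφ hb
  have hlat : ∀ b : Fin 3 → ℝ, (b 0)^2 + (b 1)^2 = 1 → x 2 - L < b 2 → b 2 < x 2 + L →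
      |Gd K φ b (b - p) - m₀ / π * (b 2 - x 2)| ≤ (1 + L) * ε := by
    intro b hb1 h1 h2
    have hbC : b ∈ Cyl K := ⟨hb1.le, by linarith⟩
    have hexp : C0 * (6 * M) * Real.exp (-d0 * (b 2 - K)) ≤ ε := by
      rw [hε]
      have := C0_pos
      have h3 : -d0 * (b 2 - K) ≤ -d0 * L := by
        have := d0_pos
        nlinarith
      have := Real.exp_le_exp.2 h3
      gcongr
    have f1 := (flux_bound hM hφ hn hb hflux hbC).trans hexp
    have f2 := (decay_rot hM hφ hn hb hbC).trans hexp
    have f3 := neumann hφ hw hb1 hbC.2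
    have e : b - p = (1 - (p 0 * b 0 + p 1 * b 1)) • ![b 0, b 1, 0] -
        (p 1 * b 0 - p 0 * b 1) • ![- b 1, b 0, 0] + (b 2 - x 2) • e3 := by
      funext i; fin_cases i
      · simp [e3]; linear_combination (p 0) * hb1
      · simp [e3]; linear_combination (p 1) * hb1
      · simp [e3, hp2]
    have e2 : Gd K φ b (b - p) - m₀ / π * (b 2 - x 2) =
        - (p 1 * b 0 - p 0 * b 1) * Gd K φ b ![- b 1, b 0, 0] +
          (b 2 - x 2) * (Gd K φ b e3 - m₀ / π) := by
      rw [e, map_add, map_sub, map_smul, map_smul, map_smul, f3]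
      simp only [smul_eq_mul]; ring
    rw [e2]
    refine (abs_add_le _ _).trans ?_
    rw [abs_mul, abs_mul, abs_neg]
    have k1 : |p 1 * b 0 - p 0 * b 1| ≤ 1 := by
      refine abs_le_of_sq_le_sq ?_ (by norm_num)
      nlinarith [sq_nonneg (p 0 * b 0 + p 1 * b 1)]
    have k2 : |b 2 - x 2| ≤ L := by rw [abs_le]; constructor <;> linarith
    have k3 : |p 1 * b 0 - p 0 * b 1| * |Gd K φ b ![- b 1, b 0, 0]| ≤ 1 * ε := by gcongr
    have k4 : |b 2 - x 2| * |Gd K φ b e3 - m₀ / π| ≤ L * ε := by gcongr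
    linarith
  have hEn : 0 ≤ (1 + L) * ε := by positivity
  have low := dil_lower (q := m₀ / π) (E := (1 + L) * ε) (z := x 2) (L := L) hM hφ hn.2.1 hG hL0
    (by linarith) hp2 hp hEn (fun b h1 h2 h3 => by
      have := (abs_le.1 (hlat b h1 h2 h3)).1; linarith) x hx.1.le rfl
  have hneg : ∀ y ∈ Scl K, Gd K (fun x => - φ x) y = - Gd K φ y := fun y hy => by
    unfold Gd; exact fderivWithin_fun_neg (uniqueDiffOn_Scl K y hy)
  have hWn : WH (cylFrom K) (fun x => - φ x) := by
    have := hn.2.1.const_mul (isOpen_cylFrom K) (-1)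
    simpa using this
  have up := dil_lower (q := - (m₀ / π)) (E := (1 + L) * ε) (z := x 2) (L := L) hM
    (φ := fun x => - φ x) hφ.neg hWn (fun y hy => by rw [hneg y hy, norm_neg]; exact hG y hy) hL0
    (by linarith) hp2 hp hEn (fun b h1 h2 h3 => by
      rw [hneg b ⟨h1.le, by linarith⟩]
      have := (abs_le.1 (hlat b h1 h2 h3)).2
      simp only [ContinuousLinearMap.neg_apply]
      linarith) x hx.1.le rfl
  rw [hneg x (cylFrom_subset_Scl K hx), abs_neg] at up
  simp only [ContinuousLinearMap.neg_apply] at up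
  rw [abs_le]
  constructor <;> linarith

theorem main_thm
    (m₀ M : ℝ) (hM : 0 < M) :
    ∃ C > (0:ℝ), ∃ d > (0:ℝ), ∀ (K : ℝ) (φ : (Fin 3 → ℝ) → ℝ),
      ContDiffOn ℝ 1 φ (closure (cylFrom K)) →
      (∀ ψ : (Fin 3 → ℝ) → ℝ, ContDiff ℝ 1 ψ → HasCompactSupport ψ →
        tsupport ψ ⊆ {x : Fin 3 → ℝ | K < x 2} →
        ∫ x in cylFrom K, ∑ i, grad3 φ x i * grad3 ψ x i = 0) →
      (∀ t : ℝ, K < t →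
        ∫ x' in diskSet, grad3 φ (Fin.snoc x' t) 2 = m₀) →
      (∀ x ∈ cylFrom K, norm3 (grad3 φ x) ≤ M) →
      ∀ x ∈ cylFrom K, K + 1 < x 2 →
        norm3 (grad3 φ x - ![0, 0, m₀ / π]) ≤ C * Real.exp (-d * (x 2 - K)) := by
  obtain ⟨d1, hd1⟩ : ∃ d1 : ℝ, d1 = min d0 1 := ⟨_, rfl⟩
  have hd1p : 0 < d1 := by rw [hd1]; exact lt_min d0_pos one_pos
  have hd1a : d1 ≤ d0 := by rw [hd1]; exact min_le_left _ _
  have hd1b : d1 ≤ 1 := by rw [hd1]; exact min_le_right _ _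
  have hC0 := C0_pos
  obtain ⟨A, hA⟩ : ∃ A : ℝ, A = 6 * C0 * M + 4 * (6 * M + |m₀ / π|) := ⟨_, rfl⟩
  have hA0 : 0 < A := by rw [hA]; positivity
  refine ⟨9 * (1 + 2 / d1) * A, by positivity, d1 / 4, by positivity, ?_⟩
  intro K φ hφ hw hflux hb x hx hxK
  rw [closure_cylFrom] at hφ
  obtain ⟨L, hL⟩ : ∃ L : ℝ, x 2 - K = 2 * L := ⟨(x 2 - K) / 2, by ring⟩
  have hL0 : 0 < L := by linarith
  have hn := nice_of_weak hφ hw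
  obtain ⟨B, hB⟩ : ∃ B : ℝ, B = (1 + L) * (C0 * (6 * M) * Real.exp (-d0 * L)) +
      2 * (3 * M * (2 + L) + |m₀ / π| * L) / Real.cosh L := ⟨_, rfl⟩
  have hz := flux_bound hM hφ hn hb hflux (cylFrom_subset_Cyl K hx)
  have hh : ∀ p : Fin 3 → ℝ, p 2 = x 2 → (p 0)^2 + (p 1)^2 < 1 → |Gd K φ x (x - p)| ≤ B := by
    intro p h1 h2
    rw [hB]; exact horiz_bound hM hφ hw hb hflux hx hL0 hL h1 h2
  have hG : ∀ i, grad3 φ x i = Gd K φ x (Pi.single i 1) := fun i => by rw [Gd_eq hx]; rfl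
  have hp0 := hh ![0, 0, x 2] (by simp) (by simp)
  have hp1 := hh ![1/2, 0, x 2] (by simp) (by norm_num)
  have hp2 := hh ![0, 1/2, x 2] (by simp) (by norm_num)
  have g0 : grad3 φ x 0 = 2 * (Gd K φ x (x - ![0, 0, x 2]) - Gd K φ x (x - ![1/2, 0, x 2])) := by
    rw [hG, ← map_sub, ← smul_eq_mul, ← map_smul]
    congr 1; funext i; fin_cases i <;> simp [Pi.single_apply]
  have g1 : grad3 φ x 1 = 2 * (Gd K φ x (x - ![0, 0, x 2]) - Gd K φ x (x - ![0, 1/2, x 2])) := by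
    rw [hG, ← map_sub, ← smul_eq_mul, ← map_smul]
    congr 1; funext i; fin_cases i <;> simp [Pi.single_apply]
  have a0 : |grad3 φ x 0| ≤ 4 * B := by
    rw [g0, abs_mul, abs_two]
    linarith [abs_sub (Gd K φ x (x - ![0, 0, x 2])) (Gd K φ x (x - ![1/2, 0, x 2]))]
  have a1 : |grad3 φ x 1| ≤ 4 * B := by
    rw [g1, abs_mul, abs_two]
    linarith [abs_sub (Gd K φ x (x - ![0, 0, x 2])) (Gd K φ x (x - ![0, 1/2, x 2]))]
  have e1 : Real.exp (-d0 * L) ≤ Real.exp (-d1 * L) := Real.exp_le_exp.2 (by nlinarith)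
  have hcosh : 1 / Real.cosh L ≤ 2 * Real.exp (-d1 * L) := by
    have k1 : Real.exp L / 2 ≤ Real.cosh L := by
      rw [Real.cosh_eq]; linarith [Real.exp_pos (-L)]
    have k2 : Real.exp (-L) ≤ Real.exp (-d1 * L) := Real.exp_le_exp.2 (by nlinarith)
    have k3 : 1 / Real.cosh L ≤ 1 / (Real.exp L / 2) :=
      one_div_le_one_div_of_le (by positivity) k1
    have k4 : 1 / (Real.exp L / 2) = 2 * Real.exp (-L) := by
      rw [Real.exp_neg]; field_simp
    linarith
  have e2 : 1 + L ≤ (1 + 2 / d1) * Real.exp (d1 * L / 2) := by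
    have k1 := Real.add_one_le_exp (d1 * L / 2)
    have k2 : (1 + 2 / d1) * (d1 * L / 2 + 1) = 1 + L + (2 / d1 + d1 * L / 2) := by
      field_simp; ring
    have k3 : (1 + 2 / d1) * (d1 * L / 2 + 1) ≤ (1 + 2 / d1) * Real.exp (d1 * L / 2) := by gcongr
    have k4 : 0 ≤ 2 / d1 + d1 * L / 2 := by positivity
    linarith
  have e3' : (1 + L) * Real.exp (-d1 * L) ≤ (1 + 2 / d1) * Real.exp (-(d1 / 4) * (x 2 - K)) := by
    have k1 : (1 + L) * Real.exp (-d1 * L) ≤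
        (1 + 2 / d1) * Real.exp (d1 * L / 2) * Real.exp (-d1 * L) := by gcongr
    rw [mul_assoc, ← Real.exp_add] at k1
    have k2 : d1 * L / 2 + -d1 * L = -(d1 / 4) * (x 2 - K) := by rw [hL]; ring
    rwa [k2] at k1
  have hBA : B ≤ A * ((1 + L) * Real.exp (-d1 * L)) := by
    have k1 : (1 + L) * (C0 * (6 * M) * Real.exp (-d0 * L)) ≤
        (1 + L) * (C0 * (6 * M) * Real.exp (-d1 * L)) := by gcongr
    have k2 : 2 * (3 * M * (2 + L) + |m₀ / π| * L) / Real.cosh L ≤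
        4 * ((6 * M + |m₀ / π|) * (1 + L)) * Real.exp (-d1 * L) := by
      have j1 : 2 * (3 * M * (2 + L) + |m₀ / π| * L) ≤ 2 * ((6 * M + |m₀ / π|) * (1 + L)) := by
        have := abs_nonneg (m₀ / π)
        nlinarith [mul_pos hM hL0]
      calc 2 * (3 * M * (2 + L) + |m₀ / π| * L) / Real.cosh L
          = 2 * (3 * M * (2 + L) + |m₀ / π| * L) * (1 / Real.cosh L) := by ring
        _ ≤ 2 * ((6 * M + |m₀ / π|) * (1 + L)) * (2 * Real.exp (-d1 * L)) := by
            have := Real.cosh_pos L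
            gcongr
        _ = _ := by ring
    rw [hB, hA]
    refine (add_le_add k1 k2).trans (le_of_eq (by ring))
  have hBf : B ≤ A * ((1 + 2 / d1) * Real.exp (-(d1 / 4) * (x 2 - K))) :=
    hBA.trans (by gcongr)
  have a2 : |grad3 φ x 2 - m₀ / π| ≤ A * ((1 + 2 / d1) * Real.exp (-(d1 / 4) * (x 2 - K))) := by
    rw [hG, single_two]
    refine hz.trans ?_
    have k1 : C0 * (6 * M) ≤ A := by
      rw [hA]
      have := abs_nonneg (m₀ / π)
      nlinarith
    have k2 : Real.exp (-d0 * (x 2 - K)) ≤ 1 * Real.exp (-(d1 / 4) * (x 2 - K)) := by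
      rw [one_mul]; apply Real.exp_le_exp.2; rw [hL]; nlinarith
    have k3 : (1:ℝ) ≤ 1 + 2 / d1 := by
      have : 0 < 2 / d1 := by positivity
      linarith
    have k4 : Real.exp (-d0 * (x 2 - K)) ≤ (1 + 2 / d1) * Real.exp (-(d1 / 4) * (x 2 - K)) :=
      k2.trans (by gcongr)
    gcongr
  refine (norm3_le _).trans ?_
  have s0 : (grad3 φ x - ![0, 0, m₀ / π]) 0 = grad3 φ x 0 := by simp
  have s1 : (grad3 φ x - ![0, 0, m₀ / π]) 1 = grad3 φ x 1 := by simp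
  have s2 : (grad3 φ x - ![0, 0, m₀ / π]) 2 = grad3 φ x 2 - m₀ / π := by simp
  rw [s0, s1, s2]
  linarith

/-- exponential convergence of incompressible potential flow in a flat
semi-infinite cylinder: a bounded weak solution of Δφ = 0 with slip condition and
flux m₀ through each cross-section satisfies |∇φ − (0,0,q₀)| ≤ C e^{−d(x₃−K)},
q₀ = m₀/π, with C, d depending only on M and m₀. -/
theorem incompressible_flat_exponential_rate
    (m₀ M : ℝ) (hM : 0 < M) :
    ∃ C > (0:ℝ), ∃ d > (0:ℝ), ∀ (K : ℝ) (φ : (Fin 3 → ℝ) → ℝ),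
      ContDiffOn ℝ 1 φ (closure (cylFrom K)) →
      (∀ ψ : (Fin 3 → ℝ) → ℝ, ContDiff ℝ 1 ψ → HasCompactSupport ψ →
        tsupport ψ ⊆ {x : Fin 3 → ℝ | K < x 2} →
        ∫ x in cylFrom K, ∑ i, grad3 φ x i * grad3 ψ x i = 0) →
      (∀ t : ℝ, K < t →
        ∫ x' in diskSet, grad3 φ (Fin.snoc x' t) 2 = m₀) →
      (∀ x ∈ cylFrom K, norm3 (grad3 φ x) ≤ M) →
      ∀ x ∈ cylFrom K, K + 1 < x 2 →
        norm3 (grad3 φ x - ![0, 0, m₀ / π]) ≤ C * Real.exp (-d * (x 2 - K)) := by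
  exact main_thm m₀ M hM
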